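/- arXiv:math/0008132 — 7 statements merged into one kernel-verified Lean document; each statement's English description precedes it below -/
import Mathlib

section
/- Tijdeman's Conjecture (mod 900) is false. Specifically, with A and B the explicit 30-element integer sets below, the reductions Ā, B̄ of A and B modulo 900 give a factorization Ā ⊕ B̄ = ℤ/900ℤ, i.e. the map A × B → ℤ/900ℤ, (a,b) ↦ (a + b) mod 900, is a bijection; moreover 0 ∈ A ∩ B, gcd{a : a ∈ A} = 1, and gcd{b : b ∈ B} = 1. -/
/-- The set `A = {0,36,72,108,144} ⊕ {0,100,200} ⊕ {0,225}` of 30 integers. -/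
def tijA : Finset ℤ :=
  (Finset.range 5 ×ˢ Finset.range 3 ×ˢ Finset.range 2).image
    (fun p => 36 * (p.1 : ℤ) + 100 * (p.2.1 : ℤ) + 225 * (p.2.2 : ℤ))

/-- The explicit 30-element set `B`. -/
def tijB : Finset ℤ :=
  {0, 30, 60, 126, 180, 210, 220, 240, 300, 306,
   330, 360, 375, 390, 480, 486, 510, 520, 540, 570,
   660, 666, 690, 750, 780, 820, 825, 840, 846, 870}

/-!
Szabó's construction. For `x₁ = 36`, `x₂ = 100`, `x₃ = 225` and `n = (5, 3, 2)`, the set `Ā` is the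
sum of the progressions `Pᵢ = {0, xᵢ, …, (nᵢ - 1) xᵢ}`. Division with remainder gives
`Pᵢ + ⟨nᵢ xᵢ⟩ = ⟨xᵢ⟩`, which has two consequences. First, `Ā + H = ⟨x₁, x₂, x₃⟩ = ℤ/900ℤ` for
`H = ⟨30⟩`, which contains every `nᵢ xᵢ`. Second, for every coset `C` of `⟨nᵢ xᵢ⟩` the set `Ā + C`
is invariant under translation by `xᵢ`, so `C` may be replaced by `xᵢ + C` without changing the sum.
The set `B̄` is `H` with `90 + ⟨180⟩`, `120 + ⟨300⟩`, `150 + ⟨450⟩` translated by `36`, `100`, `225`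
respectively; since these are not divisible by `5`, `3`, `2` respectively, the translations remove
the prime divisors of the common divisor `30`. Uniqueness of representations follows by counting.
-/

open scoped Pointwise

section AddCommGroup

variable {G : Type*} [AddCommGroup G]

/-- The progression `{0, x, 2x, …, (n - 1)x}`: the building block of the set `A`, and, when
`n • x = 0`, an explicit listing of the cyclic subgroup generated by `x`. -/
def multiplesBelow (n : ℕ) (x : G) : Set G :=
  (fun k : ℕ => k • x) '' Set.Iio n

theorem multiplesBelow_add_zmultiples_nsmul {n : ℕ} (hn : n ≠ 0) (x : G) :
    multiplesBelow n x + (AddSubgroup.zmultiples (n • x) : Set G) = AddSubgroup.zmultiples x := by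
  apply Set.Subset.antisymm
  · rintro _ ⟨_, ⟨r, -, rfl⟩, _, ⟨q, rfl⟩, rfl⟩
    exact add_mem (nsmul_mem (AddSubgroup.mem_zmultiples x) r)
      (zsmul_mem (nsmul_mem (AddSubgroup.mem_zmultiples x) n) q)
  · rintro _ ⟨m, rfl⟩
    have hn' : (n : ℤ) ≠ 0 := Int.natCast_ne_zero.mpr hn
    obtain ⟨r, hr⟩ := Int.eq_ofNat_of_zero_le (m.emod_nonneg hn')
    have hrn : r < n := by
      have := m.emod_lt_of_pos (b := n) (by lia)
      lia
    refine ⟨r • x, ⟨r, hrn, rfl⟩, (m / n) • n • x, ⟨m / n, rfl⟩, ?_⟩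
    calc r • x + (m / n) • n • x = (m % n + n * (m / n)) • x := by
          rw [hr, add_zsmul, mul_comm, mul_zsmul, natCast_zsmul, natCast_zsmul]
      _ = m • x := by rw [Int.emod_add_mul_ediv]

theorem multiplesBelow_eq_zmultiples {n : ℕ} (hn : n ≠ 0) {x : G} (hx : n • x = 0) :
    multiplesBelow n x = AddSubgroup.zmultiples x := by
  simpa [hx] using multiplesBelow_add_zmultiples_nsmul hn x

theorem vadd_multiplesBelow_add_vadd_zmultiples {n : ℕ} (hn : n ≠ 0) (x c : G) (D : Set G) :
    x +ᵥ (multiplesBelow n x + D + (c +ᵥ (AddSubgroup.zmultiples (n • x) : Set G))) =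
      multiplesBelow n x + D + (c +ᵥ (AddSubgroup.zmultiples (n • x) : Set G)) := by
  have hregroup : multiplesBelow n x + D + (c +ᵥ (AddSubgroup.zmultiples (n • x) : Set G)) =
      (AddSubgroup.zmultiples x : Set G) + (c +ᵥ D) := by
    rw [← multiplesBelow_add_zmultiples_nsmul hn x, add_vadd_comm, add_vadd_comm, add_right_comm]
  rw [hregroup, ← vadd_add_assoc, vadd_coe_set (AddSubgroup.mem_zmultiples x)]

theorem add_subset_add_of_vadd_add_eq {ι : Type*} {A B H : Set G} {C : ι → Set G} {s : ι → G}
    (hinv : ∀ i, s i +ᵥ (A + C i) = A + C i) (hH : H ⊆ B ∪ ⋃ i, C i)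
    (hB : ∀ i, s i +ᵥ C i ⊆ B) : A + H ⊆ A + B := by
  have hC (i : ι) : A + C i ⊆ A + B :=
    calc A + C i = A + (s i +ᵥ C i) := by rw [add_vadd_comm, hinv]
      _ ⊆ A + B := Set.add_subset_add_left (hB i)
  calc A + H ⊆ A + (B ∪ ⋃ i, C i) := Set.add_subset_add_left hH
    _ = (A + B) ∪ ⋃ i, (A + C i) := by rw [Set.add_union, Set.add_iUnion]
    _ ⊆ A + B := Set.union_subset subset_rfl (Set.iUnion_subset hC)

section Family

variable {ι : Type*} [Fintype ι] {n : ι → ℕ} {x : ι → G} {H : AddSubgroup G}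

theorem sum_multiplesBelow_add_eq_univ (hn : ∀ i, n i ≠ 0)
    (hx : AddSubgroup.closure (Set.range x) = ⊤) (hH : ∀ i, n i • x i ∈ H) :
    ∑ i, multiplesBelow (n i) (x i) + (H : Set G) = Set.univ := by
  refine Set.eq_univ_of_forall fun g => ?_
  obtain ⟨m, rfl⟩ : ∃ m : ι → ℤ, ∑ i, m i • x i = g := by
    rw [← Submodule.mem_span_range_iff_exists_fun ℤ, ← Submodule.mem_toAddSubgroup,
      Submodule.span_int_eq_addSubgroupClosure, hx]
    exact AddSubgroup.mem_top g
  have hsplit (i : ι) : m i • x i ∈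
      multiplesBelow (n i) (x i) + (AddSubgroup.zmultiples (n i • x i) : Set G) := by
    rw [multiplesBelow_add_zmultiples_nsmul (hn i)]
    exact AddSubgroup.zsmul_mem_zmultiples (x i) (m i)
  choose p hp k hk hpk using hsplit
  refine ⟨∑ i, p i, Set.finsetSum_mem_finsetSum _ _ _ fun i _ => hp i, ∑ i, k i, ?_, ?_⟩
  · exact sum_mem fun i _ => AddSubgroup.zmultiples_le_of_mem (hH i) (hk i)
  · simp only [← Finset.sum_add_distrib, hpk]

theorem sum_multiplesBelow_add_eq_univ_of_shifted_cosets {B : Set G} {c : ι → G}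
    (hn : ∀ i, n i ≠ 0) (hx : AddSubgroup.closure (Set.range x) = ⊤) (hH : ∀ i, n i • x i ∈ H)
    (hHB : (H : Set G) ⊆ B ∪ ⋃ i, (c i +ᵥ (AddSubgroup.zmultiples (n i • x i) : Set G)))
    (hB : ∀ i, x i +ᵥ (c i +ᵥ (AddSubgroup.zmultiples (n i • x i) : Set G)) ⊆ B) :
    ∑ i, multiplesBelow (n i) (x i) + B = Set.univ := by
  classical
  rw [← Set.univ_subset_iff, ← sum_multiplesBelow_add_eq_univ hn hx hH]
  refine add_subset_add_of_vadd_add_eq (fun i => ?_) hHB hB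
  rw [← Finset.add_sum_erase _ _ (Finset.mem_univ i)]
  exact vadd_multiplesBelow_add_vadd_zmultiples (hn i) (x i) (c i) _

end Family

end AddCommGroup

theorem zmod_addSubgroup_eq_top_of_one_mem {m : ℕ} {H : AddSubgroup (ZMod m)} (h : 1 ∈ H) :
    H = ⊤ := by
  refine eq_top_iff.mpr fun z _ => ?_
  obtain ⟨k, rfl⟩ := ZMod.intCast_surjective z
  simpa using zsmul_mem h k

theorem bijective_intCast_add_intCast {m : ℕ} [NeZero m] {A B : Finset ℤ}
    (hcard : A.card * B.card = m)
    (hAB : (Int.cast '' (A : Set ℤ) + Int.cast '' (B : Set ℤ) : Set (ZMod m)) = Set.univ) :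
    Function.Bijective (fun p : A × B => ((p.1 : ℤ) + (p.2 : ℤ) : ZMod m)) := by
  refine (Fintype.bijective_iff_surjective_and_card _).mpr ⟨fun z => ?_, by simp [hcard]⟩
  obtain ⟨_, ⟨a, ha, rfl⟩, _, ⟨b, hb, rfl⟩, hz⟩ := hAB.symm ▸ Set.mem_univ z
  exact ⟨(⟨a, ha⟩, ⟨b, hb⟩), hz⟩

/-- The generators `xᵢ` of the three progressions whose sum is `A` modulo 900. -/
def tijStep : Fin 3 → ZMod 900 := ![36, 100, 225]

/-- The lengths `nᵢ` of the three progressions whose sum is `A` modulo 900. -/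
def tijLength : Fin 3 → ℕ := ![5, 3, 2]

/-- Representatives `cᵢ` of the cosets `cᵢ + ⟨nᵢ xᵢ⟩` of `⟨30⟩` that are translated by `xᵢ`
to obtain `B` modulo 900. -/
def tijBase : Fin 3 → ZMod 900 := ![90, 120, 150]

theorem closure_range_tijStep_eq_top : AddSubgroup.closure (Set.range tijStep) = ⊤ := by
  apply zmod_addSubgroup_eq_top_of_one_mem
  have hstep (i : Fin 3) : tijStep i ∈ AddSubgroup.closure (Set.range tijStep) :=
    AddSubgroup.subset_closure ⟨i, rfl⟩
  have hbezout : (1 : ZMod 900) = (-9 : ℤ) • tijStep 0 + tijStep 1 + tijStep 2 := by decide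
  rw [hbezout]
  exact add_mem (add_mem (zsmul_mem (hstep 0) _) (hstep 1)) (hstep 2)

theorem intCast_image_tijA :
    (Int.cast '' (tijA : Set ℤ) : Set (ZMod 900)) =
      ∑ i, multiplesBelow (tijLength i) (tijStep i) := by
  rw [Fin.sum_univ_three]
  ext z
  constructor
  · rintro ⟨_, ha, rfl⟩
    obtain ⟨⟨i, j, k⟩, hijk, rfl⟩ := Finset.mem_image.mp ha
    simp only [Finset.mem_product, Finset.mem_range] at hijk
    refine ⟨_, ⟨_, ⟨i, hijk.1, rfl⟩, _, ⟨j, hijk.2.1, rfl⟩, rfl⟩, _, ⟨k, hijk.2.2, rfl⟩, ?_⟩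
    simp [tijStep, mul_comm]
  · rintro ⟨_, ⟨_, ⟨i, hi, rfl⟩, _, ⟨j, hj, rfl⟩, rfl⟩, _, ⟨k, hk, rfl⟩, rfl⟩
    refine ⟨36 * i + 100 * j + 225 * k, Finset.mem_image.mpr ⟨(i, j, k), ?_, rfl⟩, ?_⟩
    · simpa only [Finset.mem_product, Finset.mem_range] using ⟨hi, hj, hk⟩
    · simp [tijStep, mul_comm]

theorem zmultiples_thirty_eq :
    (AddSubgroup.zmultiples (30 : ZMod 900) : Set (ZMod 900)) = multiplesBelow 30 30 :=
  (multiplesBelow_eq_zmultiples (by decide) (by decide)).symm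

theorem zmultiples_tijLength_nsmul_tijStep (i : Fin 3) :
    (AddSubgroup.zmultiples (tijLength i • tijStep i) : Set (ZMod 900)) =
      multiplesBelow (tijLength i) (tijLength i • tijStep i) :=
  (multiplesBelow_eq_zmultiples (by decide +revert) (by decide +revert)).symm

theorem zmultiples_thirty_subset :
    (AddSubgroup.zmultiples (30 : ZMod 900) : Set (ZMod 900)) ⊆
      Int.cast '' (tijB : Set ℤ) ∪
        ⋃ i, (tijBase i +ᵥ
          (AddSubgroup.zmultiples (tijLength i • tijStep i) : Set (ZMod 900))) := by
  simp only [zmultiples_thirty_eq, zmultiples_tijLength_nsmul_tijStep]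
  have hcover : ∀ k < 30, k • (30 : ZMod 900) ∈ tijB.image Int.cast ∨
      ∃ i, ∃ j < tijLength i, tijBase i + j • tijLength i • tijStep i = k • 30 := by
    decide +kernel
  rintro _ ⟨k, hk, rfl⟩
  refine (hcover k hk).imp (fun hB => by simpa using hB) ?_
  rintro ⟨i, j, hj, hjk⟩
  exact Set.mem_iUnion.mpr ⟨i, _, ⟨j, hj, rfl⟩, hjk⟩

theorem tijStep_vadd_coset_subset (i : Fin 3) :
    tijStep i +ᵥ (tijBase i +ᵥ
        (AddSubgroup.zmultiples (tijLength i • tijStep i) : Set (ZMod 900))) ⊆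
      Int.cast '' (tijB : Set ℤ) := by
  rw [zmultiples_tijLength_nsmul_tijStep]
  have hshift : ∀ i, ∀ j < tijLength i,
      tijStep i + (tijBase i + j • tijLength i • tijStep i) ∈ tijB.image Int.cast := by
    decide +kernel
  rintro _ ⟨_, ⟨_, ⟨j, hj, rfl⟩, rfl⟩, rfl⟩
  simpa using hshift i j hj

theorem intCast_image_tijA_add_intCast_image_tijB_eq_univ :
    (Int.cast '' (tijA : Set ℤ) + Int.cast '' (tijB : Set ℤ) : Set (ZMod 900)) = Set.univ := by
  have hmem (i : Fin 3) : tijLength i • tijStep i ∈ AddSubgroup.zmultiples (30 : ZMod 900) := by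
    refine AddSubgroup.mem_zmultiples_iff.mpr ⟨![6, 10, 15] i, ?_⟩
    decide +revert
  rw [intCast_image_tijA]
  exact sum_multiplesBelow_add_eq_univ_of_shifted_cosets (by decide)
    closure_range_tijStep_eq_top hmem zmultiples_thirty_subset tijStep_vadd_coset_subset

theorem card_tijA : tijA.card = 30 := by decide +kernel

theorem card_tijB : tijB.card = 30 := by decide +kernel

theorem gcd_tijA : tijA.gcd id = 1 := by decide +kernel

theorem gcd_tijB : tijB.gcd id = 1 := by decide +kernel

/-- Tijdeman's Conjecture (mod 900) is false: the reductions of `A` and `B` modulo 900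
give a factorization `Ā ⊕ B̄ = ℤ/900ℤ`, `0 ∈ A ∩ B`, and both `gcd A = 1` and
`gcd B = 1`. -/
theorem stmt0 :
    Function.Bijective (fun p : ↥tijA × ↥tijB => (((p.1 : ℤ) + (p.2 : ℤ)) : ZMod 900)) ∧
    (0 : ℤ) ∈ tijA ∧ (0 : ℤ) ∈ tijB ∧
    tijA.gcd id = 1 ∧ tijB.gcd id = 1 := by
  have hcard : tijA.card * tijB.card = 900 := by rw [card_tijA, card_tijB]
  have hbij := bijective_intCast_add_intCast hcard intCast_image_tijA_add_intCast_image_tijB_eq_univ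
  have hA : (0 : ℤ) ∈ tijA := by decide
  have hB : (0 : ℤ) ∈ tijB := by decide
  exact ⟨hbij, hA, hB, gcd_tijA, gcd_tijB⟩
end

section
/- The factorization Ā ⊕ B̄ = ℤ/900ℤ given by the explicit sets A and B is quasiperiodic: B is the disjoint union of the three 10-element sets B₁ = {0, 126, 180, 306, 360, 486, 540, 666, 820, 846}, B₂ = {30, 210, 220, 300, 390, 480, 570, 660, 750, 840}, B₃ = {60, 240, 330, 375, 510, 520, 690, 780, 825, 870}, the set H = {0, 300, 600} reduces mod 900 to a subgroup of ℤ/900ℤ, and as subsets of ℤ/900ℤ one has Ā + B̄₂ = Ā + B̄₁ + 300 and Ā + B̄₃ = Ā + B̄₁ + 600 (and trivially Ā + B̄₁ = Ā + B̄₁ + 0). -/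
open Pointwise

def tijB1 : Finset ℤ := {0, 126, 180, 306, 360, 486, 540, 666, 820, 846}

def tijB2 : Finset ℤ := {30, 210, 220, 300, 390, 480, 570, 660, 750, 840}

def tijB3 : Finset ℤ := {60, 240, 330, 375, 510, 520, 690, 780, 825, 870}

/-- Reduction of a finite set of integers modulo 900, as a subset of `ℤ/900ℤ`. -/
def red (S : Finset ℤ) : Set (ZMod 900) := (fun a : ℤ => (a : ZMod 900)) '' ↑S

/-!
Under `ℤ/900ℤ ≅ ℤ/25ℤ × ℤ/9ℤ × ℤ/4ℤ`, with generators `36`, `100`, `225` of the factors, `Ā` is the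
`5 × 3 × 2` box of lowest digits, so it tiles with the subgroup generated by `30`. A coset of
`⟨5 • 36⟩` supplies the missing digits in the direction `36`, so its sum with `Ā` does not change
when the coset is translated by `36`; likewise for the other two directions. Following Szabó, `B̄`
arises from `⟨30⟩` by sliding one coset in each of the three directions. Up to the slides in
directions `36` and `225`, the sets `B̄₁`, `B̄₂`, `B̄₃` are the translates of a single set by `0`,
`300` and `600`.
-/

section Slide

variable {G : Type*} [DecidableEq G]

/-- The arithmetic progression `0, d, …, (n - 1) • d`, as a set; when `n • d = 0` and `n ≠ 0` it is
the subgroup generated by `d`. -/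
def arithProg [AddMonoid G] (d : G) (n : ℕ) : Finset G :=
  (Finset.range n).image (· • d)

/-- Szabó's modification of a tile `B`: the part `F` of `B` is translated by `t`, and the rest
of `B` stays in place. -/
def slide [Add G] (B F : Finset G) (t : G) : Finset G :=
  B \ F ∪ (F + {t})

theorem mem_arithProg [AddMonoid G] {d x : G} {n : ℕ} :
    x ∈ arithProg d n ↔ ∃ i < n, i • d = x := by
  simp [arithProg]

theorem coe_arithProg_eq_zmultiples [AddGroup G] {d : G} {n : ℕ} (hn : n ≠ 0) (hd : n • d = 0) :
    (arithProg d n : Set G) = AddSubgroup.zmultiples d := by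
  ext x
  rw [Finset.mem_coe, mem_arithProg, SetLike.mem_coe, AddSubgroup.mem_zmultiples_iff]
  constructor
  · rintro ⟨i, -, rfl⟩
    exact ⟨i, natCast_zsmul d i⟩
  · rintro ⟨k, rfl⟩
    have hn' : (n : ℤ) ≠ 0 := mod_cast hn
    obtain ⟨r, hr⟩ := Int.eq_ofNat_of_zero_le (k.emod_nonneg hn')
    refine ⟨r, by have := k.emod_lt_of_pos (b := n) (by lia); lia, ?_⟩
    calc r • d = (k % n) • d := by rw [hr, natCast_zsmul]
      _ = (k % n + k / n * n) • d := by rw [add_zsmul, mul_zsmul, natCast_zsmul, hd]; simp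
      _ = k • d := by rw [Int.emod_add_ediv_mul]

theorem arithProg_add_singleton [AddGroup G] {d : G} {n : ℕ} (hd : n • d = 0) :
    arithProg d n + {d} = arithProg d n := by
  obtain rfl | hn := eq_or_ne n 0
  · simp [arithProg]
  · apply Finset.coe_injective
    rw [Finset.coe_add, Finset.coe_singleton, coe_arithProg_eq_zmultiples hn hd, Set.add_singleton,
      Set.image_add_right]
    ext x
    exact add_mem_cancel_right (neg_mem (AddSubgroup.mem_zmultiples d))

theorem arithProg_add_arithProg_nsmul [AddMonoid G] (d : G) (m n : ℕ) :
    arithProg d m + arithProg (m • d) n = arithProg d (m * n) := by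
  ext x
  simp only [Finset.mem_add, mem_arithProg]
  constructor
  · rintro ⟨_, ⟨i, hi, rfl⟩, _, ⟨j, hj, rfl⟩, rfl⟩
    exact ⟨i + m * j, by nlinarith, by rw [add_nsmul, mul_nsmul]⟩
  · rintro ⟨k, hk, rfl⟩
    have hm : 0 < m := Nat.pos_of_mul_pos_right (Nat.zero_lt_of_lt hk)
    refine ⟨_, ⟨k % m, k.mod_lt hm, rfl⟩, _, ⟨k / m, Nat.div_lt_of_lt_mul hk, rfl⟩, ?_⟩
    rw [← mul_nsmul, ← add_nsmul, Nat.mod_add_div]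

theorem add_slide [Add G] {A B F : Finset G} {t : G} (hF : F ⊆ B)
    (ht : A + (F + {t}) = A + F) : A + slide B F t = A + B := by
  rw [slide, Finset.add_union, ht, ← Finset.add_union, Finset.sdiff_union_of_subset hF]

theorem arithProg_add_add_slide [AddCommGroup G] {d : G} {m n : ℕ} (hd : (m * n) • d = 0)
    (A' : Finset G) {B : Finset G} {b : G} (hF : {b} + arithProg (m • d) n ⊆ B) :
    arithProg d m + A' + slide B ({b} + arithProg (m • d) n) d = arithProg d m + A' + B := by
  apply add_slide hF
  calc arithProg d m + A' + ({b} + arithProg (m • d) n + {d})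
      = A' + {b} + (arithProg d m + arithProg (m • d) n + {d}) := by abel
    _ = A' + {b} + (arithProg d m + arithProg (m • d) n) := by
      rw [arithProg_add_arithProg_nsmul, arithProg_add_singleton hd]
    _ = arithProg d m + A' + ({b} + arithProg (m • d) n) := by abel

end Slide

section Residues

/-- Reduction modulo `m` of a finite set of integers, as a `Finset`; for `m = 900` it is the
computable counterpart of `red`. -/
def residues (m : ℕ) (S : Finset ℤ) : Finset (ZMod m) :=
  S.image Int.cast

theorem red_eq_coe_residues (S : Finset ℤ) : red S = residues 900 S := by
  simp [red, residues]

theorem bijective_intCast_add_intCast_s1 {m : ℕ} [NeZero m] {S T : Finset ℤ}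
    (hcover : residues m S + residues m T = Finset.univ) (hcard : S.card * T.card = m) :
    Function.Bijective (fun p : S × T => ((p.1 : ℤ) : ZMod m) + ((p.2 : ℤ) : ZMod m)) := by
  rw [Fintype.bijective_iff_surjective_and_card]
  constructor
  · intro x
    have hx : x ∈ residues m S + residues m T := hcover ▸ Finset.mem_univ x
    simp only [residues, Finset.mem_add, Finset.mem_image] at hx
    obtain ⟨_, ⟨a, ha, rfl⟩, _, ⟨b, hb, rfl⟩, hab⟩ := hx
    exact ⟨(⟨a, ha⟩, ⟨b, hb⟩), hab⟩
  · rw [Fintype.card_prod, Fintype.card_coe, Fintype.card_coe, hcard, ZMod.card]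

end Residues

section Factorization

theorem residues_tijA :
    residues 900 tijA = arithProg 36 5 + (arithProg 100 3 + arithProg 225 2) := by
  decide +kernel

theorem residues_tijA_add_slide_36 {B : Finset (ZMod 900)} {b : ZMod 900}
    (hF : {b} + arithProg 180 5 ⊆ B) :
    residues 900 tijA + slide B ({b} + arithProg 180 5) 36 = residues 900 tijA + B := by
  rw [residues_tijA]
  exact arithProg_add_add_slide (m := 5) (d := 36) (by decide) _ hF

theorem residues_tijA_add_slide_100 {B : Finset (ZMod 900)} {b : ZMod 900}
    (hF : {b} + arithProg 300 3 ⊆ B) :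
    residues 900 tijA + slide B ({b} + arithProg 300 3) 100 = residues 900 tijA + B := by
  rw [residues_tijA, add_left_comm]
  exact arithProg_add_add_slide (m := 3) (d := 100) (by decide) _ hF

theorem residues_tijA_add_slide_225 {B : Finset (ZMod 900)} {b : ZMod 900}
    (hF : {b} + arithProg 450 2 ⊆ B) :
    residues 900 tijA + slide B ({b} + arithProg 450 2) 225 = residues 900 tijA + B := by
  rw [residues_tijA, ← add_assoc, add_comm _ (arithProg 225 2)]
  exact arithProg_add_add_slide (m := 2) (d := 225) (by decide) _ hF

theorem arithProg_36_add_arithProg_100_add_arithProg_225_eq_univ :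
    arithProg (36 : ZMod 900) 25 + (arithProg 100 9 + arithProg 225 4) = Finset.univ := by
  apply Finset.coe_injective
  rw [Finset.coe_add, Finset.coe_add, coe_arithProg_eq_zmultiples (by decide) (by decide),
    coe_arithProg_eq_zmultiples (by decide) (by decide),
    coe_arithProg_eq_zmultiples (by decide) (by decide), Finset.coe_univ, Set.eq_univ_iff_forall]
  intro x
  have bezout : (16 * 36 + (100 + 225) : ZMod 900) = 1 := by decide
  refine ⟨_, ⟨x.val * 16, rfl⟩, _, ⟨_, ⟨x.val, rfl⟩, _, ⟨x.val, rfl⟩, rfl⟩, ?_⟩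
  simp only [ZMod.natCast_val, zsmul_eq_mul, Int.cast_mul, ZMod.intCast_cast, ZMod.cast_id', id_eq,
    Int.cast_ofNat]
  linear_combination x * bezout

theorem residues_tijA_add_arithProg_30_eq_univ :
    residues 900 tijA + arithProg 30 30 = Finset.univ := by
  have split_30 : arithProg (30 : ZMod 900) 30 =
      arithProg (5 • 36) 5 + (arithProg (3 • 100) 3 + arithProg (2 • 225) 2) := by
    decide +kernel
  rw [residues_tijA, split_30, add_add_add_comm, add_add_add_comm (arithProg 100 3),
    arithProg_add_arithProg_nsmul, arithProg_add_arithProg_nsmul, arithProg_add_arithProg_nsmul]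
  exact arithProg_36_add_arithProg_100_add_arithProg_225_eq_univ

theorem residues_tijB :
    residues 900 tijB = slide (slide (slide (arithProg 30 30) ({90} + arithProg 180 5) 36)
      ({120} + arithProg 300 3) 100) ({150} + arithProg 450 2) 225 := by
  decide +kernel

theorem residues_tijA_add_residues_tijB_eq_univ :
    residues 900 tijA + residues 900 tijB = Finset.univ := by
  rw [residues_tijB, residues_tijA_add_slide_225 (by decide +kernel),
    residues_tijA_add_slide_100 (by decide +kernel),
    residues_tijA_add_slide_36 (by decide +kernel), residues_tijA_add_arithProg_30_eq_univ]

end Factorization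

section Quasiperiodicity

/-- The common model of the three blocks of `B̄`: the subgroup generated by `90`, with `720` moved
to `820`, which is its share of the slide in direction `100`. -/
def blockModel : Finset (ZMod 900) :=
  slide (arithProg 90 10) {720} 100

theorem residues_tijB1 :
    residues 900 tijB1 = slide blockModel ({90} + arithProg 180 5) 36 := by
  decide +kernel

theorem residues_tijB2 : residues 900 tijB2 = blockModel + {300} := by
  decide +kernel

theorem residues_tijB3 :
    residues 900 tijB3 = slide (blockModel + {600}) ({150} + arithProg 450 2) 225 := by
  decide +kernel

theorem residues_tijA_add_residues_tijB1_eq_add_blockModel :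
    residues 900 tijA + residues 900 tijB1 = residues 900 tijA + blockModel := by
  rw [residues_tijB1, residues_tijA_add_slide_36 (by decide +kernel)]

theorem red_tijA_add_red_tijB2 :
    red tijA + red tijB2 = red tijA + red tijB1 + {300} := by
  simp only [red_eq_coe_residues, ← Finset.coe_singleton, ← Finset.coe_add, Finset.coe_inj]
  rw [residues_tijA_add_residues_tijB1_eq_add_blockModel, residues_tijB2, add_assoc]

theorem red_tijA_add_red_tijB3 :
    red tijA + red tijB3 = red tijA + red tijB1 + {600} := by
  simp only [red_eq_coe_residues, ← Finset.coe_singleton, ← Finset.coe_add, Finset.coe_inj]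
  rw [residues_tijA_add_residues_tijB1_eq_add_blockModel, residues_tijB3,
    residues_tijA_add_slide_225 (by decide +kernel), add_assoc]

theorem coe_zmultiples_300_eq :
    (AddSubgroup.zmultiples (300 : ZMod 900) : Set (ZMod 900)) = {0, 300, 600} := by
  have progression : arithProg (300 : ZMod 900) 3 = {0, 300, 600} := by decide
  rw [← coe_arithProg_eq_zmultiples (n := 3) (by decide) (by decide), progression]
  simp

end Quasiperiodicity

/-- The factorization `Ā ⊕ B̄ = ℤ/900ℤ` is quasiperiodic: `B` is the disjoint union of
`B₁, B₂, B₃`, the set `{0, 300, 600}` reduces mod 900 to a subgroup of `ℤ/900ℤ`, and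
`Ā + B̄₂ = Ā + B̄₁ + 300`, `Ā + B̄₃ = Ā + B̄₁ + 600` (and trivially
`Ā + B̄₁ = Ā + B̄₁ + 0`). -/
theorem stmt1 :
    Function.Bijective (fun p : ↥tijA × ↥tijB => (((p.1 : ℤ) + (p.2 : ℤ)) : ZMod 900)) ∧
    (tijB1 ∪ tijB2 ∪ tijB3 = tijB) ∧
    Disjoint tijB1 tijB2 ∧ Disjoint tijB1 tijB3 ∧ Disjoint tijB2 tijB3 ∧
    (∃ H : AddSubgroup (ZMod 900),
      (H : Set (ZMod 900)) = {((0 : ℤ) : ZMod 900), ((300 : ℤ) : ZMod 900), ((600 : ℤ) : ZMod 900)}) ∧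
    red tijA + red tijB2 = red tijA + red tijB1 + {((300 : ℤ) : ZMod 900)} ∧
    red tijA + red tijB3 = red tijA + red tijB1 + {((600 : ℤ) : ZMod 900)} ∧
    red tijA + red tijB1 = red tijA + red tijB1 + {((0 : ℤ) : ZMod 900)} := by
  exact ⟨bijective_intCast_add_intCast_s1 residues_tijA_add_residues_tijB_eq_univ (by decide +kernel),
    by decide, by decide, by decide, by decide,
    ⟨AddSubgroup.zmultiples 300, mod_cast coe_zmultiples_300_eq⟩,
    mod_cast red_tijA_add_red_tijB2, mod_cast red_tijA_add_red_tijB3, by simp⟩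
end

section
/- For all a₁, a₂ ∈ A: if 5 divides a₁ − a₂ then 25 divides a₁ − a₂; if 3 divides a₁ − a₂ then 9 divides a₁ − a₂; and if 2 divides a₁ − a₂ then 4 divides a₁ − a₂. Consequently, for all a₁, a₂ ∈ A the exponential sum Σ_{a ∈ A} e^{2πi (a₁ − a₂) a / 900} is nonzero. -/
/-!
For pairwise coprime `n k` put `N = ∏ n k ^ 2` and consider the numbers `∑ (N / n k ^ 2) * i k` with
digits `0 ≤ i k < n k`; the set `A` is the case `n = (5, 3, 2)`. Modulo `n k ^ 2` only the `k`-th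
term survives, and `N / n k ^ 2` is a unit modulo `n k`. Hence a difference divisible by `n k` has
equal `k`-th digits, and is then divisible by `n k ^ 2`. The exponential sum at `d` factors into the
geometric sums `∑_{i < n k} η ^ (d i)` with `η` of order `n k ^ 2`; such a sum vanishes only if
`n k ∣ d` but not `n k ^ 2 ∣ d`, which no difference of two elements satisfies.
-/

open Finset Function

section GeometricSum

theorem geom_sum_ne_zero_of_pow_eq_one_imp {R : Type*} [Ring R] {x : R} {m : ℕ}
    (hm : (m : R) ≠ 0) (hx : x ^ m = 1 → x = 1) : ∑ i ∈ range m, x ^ i ≠ 0 := by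
  intro hsum
  have hpow : x ^ m = 1 := by
    rw [← sub_eq_zero, ← geom_sum_mul, hsum, zero_mul]
  simp [hx hpow, hm] at hsum

theorem geom_sum_zpow_ne_zero_of_dvd_imp_sq_dvd {K : Type*} [Field K] {η : K} {m : ℕ} [NeZero m]
    (hη : IsPrimitiveRoot η (m ^ 2)) {d : ℤ} (hd : (m : ℤ) ∣ d → (m : ℤ) ^ 2 ∣ d) :
    ∑ i ∈ range m, (η ^ d) ^ i ≠ 0 := by
  have hm : (m : K) ≠ 0 := by
    have := hη.neZero'
    simpa using this.out
  refine geom_sum_ne_zero_of_pow_eq_one_imp hm fun hpow => ?_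
  have hdvd : (m : ℤ) ^ 2 ∣ d * m := by
    rw [← zpow_natCast, ← zpow_mul, hη.zpow_eq_one_iff_dvd] at hpow
    exact_mod_cast hpow
  rw [sq, mul_dvd_mul_iff_right (NeZero.ne (m : ℤ))] at hdvd
  rw [hη.zpow_eq_one_iff_dvd]
  exact_mod_cast hd hdvd

end GeometricSum

section DigitSet

variable {ι : Type*} [Fintype ι] [DecidableEq ι]

/-- The weight `N / n k ^ 2` of the `k`-th digit, where `N = ∏ l, n l ^ 2`, written as a product so
that no division occurs. -/
def digitWeight (n : ι → ℕ) (k : ι) : ℕ :=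
  ∏ l ∈ univ.erase k, n l ^ 2

/-- The number with digits `i` with respect to the weights `digitWeight n`. -/
def digitValue (n i : ι → ℕ) : ℕ :=
  ∑ k, digitWeight n k * i k

/-- The integers whose `k`-th digit lies in `{0, …, n k - 1}` for every `k`: the
generalization of `tijA` to an arbitrary family `n` in place of `(5, 3, 2)`. -/
def digitSet (n : ι → ℕ) : Finset ℤ :=
  (Fintype.piFinset fun k => range (n k)).image fun i => (digitValue n i : ℤ)

variable {n : ι → ℕ}

theorem digitWeight_mul_sq (n : ι → ℕ) (k : ι) :
    digitWeight n k * n k ^ 2 = ∏ l, n l ^ 2 :=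
  prod_erase_mul univ (fun l => n l ^ 2) (mem_univ k)

theorem sq_dvd_digitWeight {k l : ι} (hkl : k ≠ l) : n k ^ 2 ∣ digitWeight n l :=
  dvd_prod_of_mem (fun k => n k ^ 2) (mem_erase.2 ⟨hkl, mem_univ k⟩)

theorem coprime_digitWeight (hn : Pairwise (Nat.Coprime on n)) (k : ι) :
    (n k).Coprime (digitWeight n k) :=
  Nat.Coprime.prod_right fun _ hl => (hn (ne_of_mem_erase hl).symm).pow_right 2

theorem digitValue_modEq (n i : ι → ℕ) (k : ι) :
    digitValue n i ≡ digitWeight n k * i k [MOD n k ^ 2] := by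
  have hrest : n k ^ 2 ∣ ∑ l ∈ univ.erase k, digitWeight n l * i l :=
    dvd_sum fun l hl => (sq_dvd_digitWeight (ne_of_mem_erase hl).symm).mul_right (i l)
  rw [digitValue, ← add_sum_erase _ _ (mem_univ k)]
  exact (Nat.modEq_zero_iff_dvd.2 hrest).add_left _

theorem mem_digitSet {a : ℤ} :
    a ∈ digitSet n ↔ ∃ i : ι → ℕ, (∀ k, i k < n k) ∧ (digitValue n i : ℤ) = a := by
  simp [digitSet]

theorem digit_eq_of_digitValue_modEq (hn : Pairwise (Nat.Coprime on n)) {i j : ι → ℕ} {k : ι}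
    (hi : i k < n k) (hj : j k < n k) (h : digitValue n i ≡ digitValue n j [MOD n k]) :
    i k = j k := by
  have hmod (i : ι → ℕ) : digitValue n i ≡ digitWeight n k * i k [MOD n k] :=
    (digitValue_modEq n i k).of_dvd (dvd_pow_self _ two_ne_zero)
  have hweighted : digitWeight n k * i k ≡ digitWeight n k * j k [MOD n k] :=
    (hmod i).symm.trans (h.trans (hmod j))
  have hdigit : i k ≡ j k [MOD n k] :=
    hweighted.cancel_left_of_coprime (coprime_digitWeight hn k)
  exact hdigit.eq_of_lt_of_lt hi hj

theorem sq_dvd_sub_of_mem_digitSet (hn : Pairwise (Nat.Coprime on n)) {a b : ℤ}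
    (ha : a ∈ digitSet n) (hb : b ∈ digitSet n) {k : ι} (h : (n k : ℤ) ∣ a - b) :
    (n k : ℤ) ^ 2 ∣ a - b := by
  obtain ⟨i, hi, rfl⟩ := mem_digitSet.1 ha
  obtain ⟨j, hj, rfl⟩ := mem_digitSet.1 hb
  have hji : j k = i k :=
    digit_eq_of_digitValue_modEq hn (hj k) (hi k) (Nat.modEq_iff_dvd.2 h)
  have hmod : digitValue n j ≡ digitValue n i [MOD n k ^ 2] :=
    (digitValue_modEq n j k).trans (hji ▸ (digitValue_modEq n i k).symm)
  exact_mod_cast hmod.dvd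

theorem injOn_digitValue (hn : Pairwise (Nat.Coprime on n)) :
    Set.InjOn (digitValue n) (Fintype.piFinset fun k => range (n k)) := by
  intro i hi j hj hij
  simp only [mem_coe, Fintype.mem_piFinset, mem_range] at hi hj
  exact funext fun k => digit_eq_of_digitValue_modEq hn (hi k) (hj k) (hij ▸ Nat.ModEq.rfl)

theorem pow_digitValue {M : Type*} [CommMonoid M] (x : M) (n i : ι → ℕ) :
    x ^ digitValue n i = ∏ k, (x ^ digitWeight n k) ^ i k := by
  simp only [digitValue, ← prod_pow_eq_pow_sum, pow_mul]

variable {K : Type*} [Field K]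

theorem sum_digitSet_zpow (hn : Pairwise (Nat.Coprime on n)) (x : K) :
    ∑ a ∈ digitSet n, x ^ a = ∏ k, ∑ i ∈ range (n k), (x ^ digitWeight n k) ^ i := by
  have hinj : Set.InjOn (fun i => (digitValue n i : ℤ)) (Fintype.piFinset fun k => range (n k)) :=
    Nat.cast_injective.comp_injOn (injOn_digitValue hn)
  rw [digitSet, sum_image hinj, prod_univ_sum]
  simp only [zpow_natCast, pow_digitValue]

theorem sum_digitSet_zpow_ne_zero [∀ k, NeZero (n k)] (hn : Pairwise (Nat.Coprime on n)) {ζ : K}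
    (hζ : IsPrimitiveRoot ζ (∏ k, n k ^ 2)) {d : ℤ}
    (hd : ∀ k, (n k : ℤ) ∣ d → (n k : ℤ) ^ 2 ∣ d) :
    ∑ a ∈ digitSet n, ζ ^ (d * a) ≠ 0 := by
  have hN : ∏ k, n k ^ 2 ≠ 0 := prod_ne_zero_iff.2 fun k _ => pow_ne_zero 2 (NeZero.ne (n k))
  simp only [zpow_mul]
  rw [sum_digitSet_zpow hn, prod_ne_zero_iff]
  intro k _
  have hη : IsPrimitiveRoot (ζ ^ digitWeight n k) (n k ^ 2) :=
    hζ.pow (Nat.pos_of_ne_zero hN) (digitWeight_mul_sq n k).symm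
  have hcomm : (ζ ^ d) ^ digitWeight n k = (ζ ^ digitWeight n k) ^ d := by
    rw [← zpow_natCast, ← zpow_natCast, zpow_comm]
  rw [hcomm]
  exact geom_sum_zpow_ne_zero_of_dvd_imp_sq_dvd hη (hd k)

theorem stmt3_general (hn : Pairwise (Nat.Coprime on n)) {ζ : K}
    (hζ : IsPrimitiveRoot ζ (∏ k, n k ^ 2)) :
    (∀ a₁ ∈ digitSet n, ∀ a₂ ∈ digitSet n, ∀ k,
      (n k : ℤ) ∣ a₁ - a₂ → (n k : ℤ) ^ 2 ∣ a₁ - a₂) ∧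
    (∀ a₁ ∈ digitSet n, ∀ a₂ ∈ digitSet n, ∑ a ∈ digitSet n, ζ ^ ((a₁ - a₂) * a) ≠ 0) := by
  have hdvd a₁ (h₁ : a₁ ∈ digitSet n) a₂ (h₂ : a₂ ∈ digitSet n) k :
      (n k : ℤ) ∣ a₁ - a₂ → (n k : ℤ) ^ 2 ∣ a₁ - a₂ :=
    sq_dvd_sub_of_mem_digitSet hn h₁ h₂
  refine ⟨hdvd, fun a₁ h₁ a₂ h₂ => ?_⟩
  obtain ⟨i, hi, -⟩ := mem_digitSet.1 h₁
  have (k : ι) : NeZero (n k) := .of_pos (Nat.zero_lt_of_lt (hi k))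
  exact sum_digitSet_zpow_ne_zero hn hζ (hdvd a₁ h₁ a₂ h₂)

end DigitSet

theorem tijA_eq_digitSet : tijA = digitSet ![5, 3, 2] := by
  decide

theorem pairwise_coprime_five_three_two : Pairwise (Nat.Coprime on ![5, 3, 2]) := by
  unfold Pairwise
  decide

theorem exp_div_zpow (z w : ℂ) (d : ℤ) :
    Complex.exp (z / w) ^ d = Complex.exp (z * d / w) := by
  rw [← Complex.exp_int_mul, mul_div_left_comm, mul_div_assoc]

/-- For all `a₁, a₂ ∈ A`: if `5 ∣ a₁ - a₂` then `25 ∣ a₁ - a₂`; if `3 ∣ a₁ - a₂` then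
`9 ∣ a₁ - a₂`; if `2 ∣ a₁ - a₂` then `4 ∣ a₁ - a₂`.  Consequently for all
`a₁, a₂ ∈ A` the exponential sum `Σ_{a ∈ A} e^{2πi (a₁ - a₂) a / 900}` is nonzero. -/
theorem stmt3 :
    (∀ a₁ ∈ tijA, ∀ a₂ ∈ tijA,
      (5 ∣ a₁ - a₂ → 25 ∣ a₁ - a₂) ∧ (3 ∣ a₁ - a₂ → 9 ∣ a₁ - a₂) ∧
        (2 ∣ a₁ - a₂ → 4 ∣ a₁ - a₂)) ∧
    (∀ a₁ ∈ tijA, ∀ a₂ ∈ tijA,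
      (∑ a ∈ tijA, Complex.exp (2 * Real.pi * Complex.I * (a₁ - a₂) * a / 900)) ≠ 0) := by
  have hζ := Complex.isPrimitiveRoot_exp (∏ k, ![5, 3, 2] k ^ 2) (by decide)
  simpa [tijA_eq_digitSet, exp_div_zpow, Fin.forall_fin_succ, Fin.prod_univ_succ,
    mul_assoc] using stmt3_general pairwise_coprime_five_three_two hζ
end

section
/- For every integer k, the exponential sum Σ_{b ∈ B} e^{2πi k b / 900} equals 0 if and only if k is not divisible by 900 and Σ_{a ∈ A} e^{2πi k a / 900} ≠ 0. Equivalently, the set of integers k with Σ_{b ∈ B} e^{2πi k b / 900} ≠ 0 is exactly the union of 900ℤ with the set of integers k satisfying (5 ∣ k ∧ 25 ∤ k) ∨ (3 ∣ k ∧ 9 ∤ k) ∨ (2 ∣ k ∧ 4 ∤ k). -/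
/-! The set `B` is the subgroup `30ℤ / 900ℤ` with three of its fibers moved: `90 + 180ℤ` by `36`,
`120 + 300ℤ` by `100` and `150 + 450ℤ` by `225`. At `z = e^{2πi k / 900}` the subgroup contributes
`30` or `0` according to whether `z ^ 30 = 1`, and the three moves contribute
`5 z^90 (z^36 - 1)`, `3 z^120 (z^100 - 1)`, `2 z^150 (z^225 - 1)` or `0`, each being nonzero exactly
when the corresponding factor of the product `∑_{a ∈ A} z ^ a` vanishes. If `z ^ 30 = 1`, the moves
have total modulus at most `20 < 30`. If `z ^ 30 ≠ 1`, at most two of them are nonzero, and two of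
them cannot cancel: `1 - w` divides `q` for a `q`-th root of unity `w ≠ 1`, so a cancellation of the
moves for coprime `p` and `q` would make `p` divide `q ^ 2` among algebraic integers. -/

open Finset

theorem two_mul_add_add_lt_mul_mul {p q r : ℕ} (hp : 1 < p) (hq : 1 < q) (hr : 1 < r)
    (hpq : p ≠ q) (hpr : p ≠ r) (hqr : q ≠ r) : 2 * (p + q + r) < p * q * r := by
  have of_lt {a b c : ℕ} (ha : 1 < a) (hab : a < b) (hbc : b < c) :
      2 * (a + b + c) < a * b * c :=
    calc 2 * (a + b + c) < 2 * 3 * c := by lia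
      _ ≤ a * b * c := by gcongr <;> lia
  rcases hpq.lt_or_gt with h | h <;> rcases hpr.lt_or_gt with h' | h' <;>
    rcases hqr.lt_or_gt with h'' | h'' <;>
    grind

theorem ne_of_coprime {p q : ℕ} (hp : 1 < p) (hpq : p.Coprime q) : p ≠ q := by
  rintro rfl
  exact hp.ne' ((Nat.coprime_self p).1 hpq)

theorem eq_one_of_pow_mul_eq_one {G : Type*} [Monoid G] {y : G} {p q r : ℕ}
    (hpq : p.Coprime q) (hpr : p.Coprime r) (hqr : q.Coprime r)
    (h₁ : y ^ (q * r) = 1) (h₂ : y ^ (p * r) = 1) (h₃ : y ^ (p * q) = 1) : y = 1 := by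
  have dvd_r : orderOf y ∣ r := by
    have := Nat.dvd_gcd (orderOf_dvd_of_pow_eq_one h₂) (orderOf_dvd_of_pow_eq_one h₁)
    rwa [Nat.gcd_mul_right, hpq, one_mul] at this
  exact orderOf_eq_one_iff.1 <|
    Nat.eq_one_of_dvd_coprimes (hpr.mul_left hqr) (orderOf_dvd_of_pow_eq_one h₃) dvd_r

theorem zpow_pow_eq_one_iff_dvd {G : Type*} [DivisionCommMonoid G] {ζ : G} {d m : ℕ}
    (hζ : IsPrimitiveRoot ζ (d * m)) (hm : m ≠ 0) (k : ℤ) : (ζ ^ k) ^ m = 1 ↔ (d : ℤ) ∣ k := by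
  rw [← zpow_natCast, ← zpow_mul, hζ.zpow_eq_one_iff_dvd, Nat.cast_mul]
  exact Int.mul_dvd_mul_iff_right (by exact_mod_cast hm)

section CommRing

variable {R : Type*} [CommRing R]

theorem sum_geom_sum_mul_one_sub {w : R} {q : ℕ} (hw : ∑ i ∈ range q, w ^ i = 0) :
    (∑ i ∈ range q, ∑ j ∈ range i, w ^ j) * (1 - w) = q := by
  calc (∑ i ∈ range q, ∑ j ∈ range i, w ^ j) * (1 - w)
      = ∑ i ∈ range q, (1 - w ^ i) := by
        rw [sum_mul]
        exact sum_congr rfl fun i _ ↦ geom_sum_mul_neg w i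
    _ = q := by simp [hw]

/-- The change of `∑ b, z ^ b` when the fiber `{a + m p i : 0 ≤ i < p}` of the exponent set is
translated by `m`. Modulo `m p ^ 2` this fiber is a coset of the subgroup of order `p`. -/
def fiberShift (p m a : ℕ) (z : R) : R :=
  z ^ a * (z ^ m - 1) * ∑ i ∈ range p, (z ^ (m * p)) ^ i

theorem fiberShift_of_pow_eq_one {p m a : ℕ} {z : R} (h : z ^ (m * p) = 1) :
    fiberShift p m a z = p * (z ^ a * (z ^ m - 1)) := by
  simp [fiberShift, h, mul_comm (p : R)]

/-- The sum `∑ b, z ^ b` over Szabó's modification of the subgroup `p q r ℤ` of `ℤ / (p q r) ^ 2`: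
the fibers of lengths `p`, `q`, `r` starting at `a`, `b`, `c` are translated by `(q r) ^ 2`,
`(p r) ^ 2`, `(p q) ^ 2`. It is defined as a formal combination, so `a`, `b`, `c` are arbitrary;
it is the sum over an actual set when the three fibers are disjoint and lie in the subgroup. -/
def szaboSum (p q r a b c : ℕ) (z : R) : R :=
  ∑ j ∈ range (p * q * r), (z ^ (p * q * r)) ^ j + fiberShift p ((q * r) ^ 2) a z +
    fiberShift q ((p * r) ^ 2) b z + fiberShift r ((p * q) ^ 2) c z

end CommRing

section Field

variable {K : Type*} [Field K]

theorem eq_one_of_geom_sum_ne_zero {w : K} {p : ℕ} (hw : w ^ p = 1)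
    (h : ∑ i ∈ range p, w ^ i ≠ 0) : w = 1 := by
  by_contra hw_ne
  exact h (by rw [geom_sum_eq hw_ne, hw, sub_self, zero_div])

theorem pow_mul_eq_one_of_fiberShift_ne_zero {p m a : ℕ} {z : K} (hz : z ^ (m * p ^ 2) = 1)
    (h : fiberShift p m a z ≠ 0) : z ^ (m * p) = 1 :=
  eq_one_of_geom_sum_ne_zero (by rw [← pow_mul, mul_assoc, ← sq, hz]) (right_ne_zero_of_mul h)

theorem eq_one_of_prod_geom_sum_ne_zero {p q r : ℕ} {z : K}
    (hpq : p.Coprime q) (hpr : p.Coprime r) (hqr : q.Coprime r) (hz : z ^ (p * q * r) = 1)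
    (h : (∑ i ∈ range p, (z ^ (q * r) ^ 2) ^ i) * (∑ i ∈ range q, (z ^ (p * r) ^ 2) ^ i) *
      (∑ i ∈ range r, (z ^ (p * q) ^ 2) ^ i) ≠ 0) : z = 1 := by
  obtain ⟨⟨hp, hq⟩, hr⟩ := by simpa only [mul_ne_zero_iff] using h
  have pow_eq_one {n : ℕ} (hn : p * q * r ∣ n) : z ^ n = 1 := by
    obtain ⟨t, rfl⟩ := hn
    rw [pow_mul, hz, one_pow]
  refine eq_one_of_pow_mul_eq_one (hpq.pow 2 2) (hpr.pow 2 2) (hqr.pow 2 2) ?_ ?_ ?_ <;>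
    rw [← mul_pow]
  · exact eq_one_of_geom_sum_ne_zero (by rw [← pow_mul]; exact pow_eq_one ⟨q * r, by ring⟩) hp
  · exact eq_one_of_geom_sum_ne_zero (by rw [← pow_mul]; exact pow_eq_one ⟨p * r, by ring⟩) hq
  · exact eq_one_of_geom_sum_ne_zero (by rw [← pow_mul]; exact pow_eq_one ⟨p * q, by ring⟩) hr

variable [CharZero K]

theorem geom_sum_eq_zero_iff {w : K} {p : ℕ} (hp : p ≠ 0) :
    ∑ i ∈ range p, w ^ i = 0 ↔ w ^ p = 1 ∧ w ≠ 1 := by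
  rcases eq_or_ne w 1 with rfl | hw
  · simp [hp]
  · simp [geom_sum_eq hw, div_eq_zero_iff, sub_eq_zero, hw]

theorem dvd_of_natCast_mul_isIntegral_eq {β : K} (hβ : IsIntegral ℤ β) {p n : ℕ} (hp : p ≠ 0)
    (h : p * β = n) : p ∣ n := by
  have hβ_rat : algebraMap ℚ K (n / p) = β := by
    rw [map_div₀, map_natCast, map_natCast, ← h, mul_div_cancel_left₀ _ (by exact_mod_cast hp)]
  rw [← hβ_rat, isIntegral_algebraMap_iff (algebraMap ℚ K).injective,
    IsIntegrallyClosed.isIntegral_iff] at hβ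
  obtain ⟨y, hy⟩ := hβ
  rw [eq_intCast, eq_div_iff (by exact_mod_cast hp)] at hy
  exact Int.natCast_dvd_natCast.1 ⟨y, by rw [mul_comm]; exact_mod_cast hy.symm⟩

theorem natCast_mul_add_natCast_mul_sub_one_ne_zero {p q : ℕ} (hp : 1 < p) (hpq : p.Coprime q)
    {α u w : K} (hα : IsIntegral ℤ α) (hu : IsIntegral ℤ u⁻¹) (hu₀ : u ≠ 0) (hw : IsIntegral ℤ w)
    (hwq : ∑ i ∈ range q, w ^ i = 0) : p * α + q * (u * (w - 1)) ≠ 0 := by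
  intro h
  set c := ∑ i ∈ range q, ∑ j ∈ range i, w ^ j
  have hc : IsIntegral ℤ c :=
    IsIntegral.sum _ fun i _ ↦ IsIntegral.sum _ fun j _ ↦ hw.pow j
  have hcw : c * (1 - w) = q := sum_geom_sum_mul_one_sub hwq
  have hmul : p * (α * u⁻¹ * c) = ((q ^ 2 : ℕ) : K) := by
    calc p * (α * u⁻¹ * c) = q * (u * u⁻¹) * (c * (1 - w)) := by
          linear_combination u⁻¹ * c * h
      _ = ((q ^ 2 : ℕ) : K) := by rw [mul_inv_cancel₀ hu₀, hcw]; push_cast; ring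
  have hdvd : p ∣ q ^ 2 :=
    dvd_of_natCast_mul_isIntegral_eq ((hα.mul hu).mul hc) (by lia) hmul
  exact hp.ne' (Nat.eq_one_of_dvd_coprimes (hpq.pow_right 2) dvd_rfl hdvd)

variable {p q m n a b : ℕ} {z : K}

theorem fiberShift_eq_zero_iff (hp : p ≠ 0) (hm : m ≠ 0) (hz : z ^ (m * p ^ 2) = 1) :
    fiberShift p m a z = 0 ↔ ∑ i ∈ range p, (z ^ m) ^ i ≠ 0 := by
  have hz₀ : z ≠ 0 := (IsUnit.of_pow_eq_one hz (by positivity)).ne_zero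
  have hzp : (z ^ (m * p)) ^ p = 1 := by rw [← pow_mul, mul_assoc, ← sq, hz]
  rw [Ne, fiberShift, mul_eq_zero, geom_sum_eq_zero_iff hp, geom_sum_eq_zero_iff hp, ← pow_mul z m]
  simp only [mul_eq_zero, pow_eq_zero_iff', hz₀, hzp, sub_eq_zero]
  tauto

theorem fiberShift_add_eq_zero_iff (hp : 1 < p) (hq : q ≠ 0) (hn : n ≠ 0) (hpq : p.Coprime q)
    (hzp : z ^ (m * p ^ 2) = 1) (hzq : z ^ (n * q ^ 2) = 1) :
    fiberShift p m a z + fiberShift q n b z = 0 ↔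
      fiberShift p m a z = 0 ∧ fiberShift q n b z = 0 := by
  refine ⟨fun h ↦ ?_, fun h ↦ by rw [h.1, h.2, add_zero]⟩
  suffices hp_zero : fiberShift p m a z = 0 from ⟨hp_zero, by rwa [hp_zero, zero_add] at h⟩
  by_contra hp_ne
  have hq_ne : fiberShift q n b z ≠ 0 := fun h₀ ↦ hp_ne (by rwa [h₀, add_zero] at h)
  have hN : n * q ^ 2 ≠ 0 := by positivity
  have hz_int : IsIntegral ℤ z := .of_pow hN.pos (hzq ▸ isIntegral_one)
  have hz_inv_int : IsIntegral ℤ z⁻¹ :=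
    .of_pow hN.pos (by rw [inv_pow, hzq, inv_one]; exact isIntegral_one)
  have hgeom : ∑ i ∈ range q, (z ^ n) ^ i = 0 :=
    not_not.1 <| (fiberShift_eq_zero_iff hq hn hzq).not.1 hq_ne
  rw [fiberShift_of_pow_eq_one (pow_mul_eq_one_of_fiberShift_ne_zero hzp hp_ne),
    fiberShift_of_pow_eq_one (pow_mul_eq_one_of_fiberShift_ne_zero hzq hq_ne)] at h
  exact natCast_mul_add_natCast_mul_sub_one_ne_zero hp hpq
    ((hz_int.pow a).mul ((hz_int.pow m).sub isIntegral_one))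
    (inv_pow z b ▸ hz_inv_int.pow b)
    (pow_ne_zero b (IsUnit.of_pow_eq_one hzq hN).ne_zero) (hz_int.pow n) hgeom h

theorem fiberShift_add_add_eq_zero_iff {r c : ℕ} (hp : 1 < p) (hq : 1 < q) (hr : 1 < r)
    (hpq : p.Coprime q) (hpr : p.Coprime r) (hqr : q.Coprime r)
    (hz : z ^ (p * q * r) ^ 2 = 1) (hz_pqr : z ^ (p * q * r) ≠ 1) :
    fiberShift p ((q * r) ^ 2) a z + fiberShift q ((p * r) ^ 2) b z +
        fiberShift r ((p * q) ^ 2) c z = 0 ↔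
      fiberShift p ((q * r) ^ 2) a z = 0 ∧ fiberShift q ((p * r) ^ 2) b z = 0 ∧
        fiberShift r ((p * q) ^ 2) c z = 0 := by
  have hzp : z ^ ((q * r) ^ 2 * p ^ 2) = 1 := by rw [← hz]; ring
  have hzq : z ^ ((p * r) ^ 2 * q ^ 2) = 1 := by rw [← hz]; ring
  have hzr : z ^ ((p * q) ^ 2 * r ^ 2) = 1 := by rw [← hz]; ring
  have hPQ := fiberShift_add_eq_zero_iff (a := a) (b := b) hp (by lia) (by positivity) hpq hzp hzq
  have hPR := fiberShift_add_eq_zero_iff (a := a) (b := c) hp (by lia) (by positivity) hpr hzp hzr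
  have hQR := fiberShift_add_eq_zero_iff (a := b) (b := c) hq (by lia) (by positivity) hqr hzq hzr
  have some_zero : fiberShift p ((q * r) ^ 2) a z = 0 ∨ fiberShift q ((p * r) ^ 2) b z = 0 ∨
      fiberShift r ((p * q) ^ 2) c z = 0 := by
    by_contra! ⟨hP, hQ, hR⟩
    refine hz_pqr (eq_one_of_pow_mul_eq_one hpq hpr hqr ?_ ?_ ?_)
    · rw [← pow_mul, ← pow_mul_eq_one_of_fiberShift_ne_zero hzp hP]; ring
    · rw [← pow_mul, ← pow_mul_eq_one_of_fiberShift_ne_zero hzq hQ]; ring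
    · rw [← pow_mul, ← pow_mul_eq_one_of_fiberShift_ne_zero hzr hR]; ring
  rcases some_zero with hP | hQ | hR
  · simpa [hP] using hQR
  · simpa [hQ] using hPR
  · simpa [hR, and_assoc] using hPQ

end Field

theorem norm_fiberShift_le {𝕜 : Type*} [NormedField 𝕜] {p m a : ℕ} {z : 𝕜} (hz : ‖z‖ = 1) :
    ‖fiberShift p m a z‖ ≤ 2 * p := by
  have hsub : ‖z ^ m - 1‖ ≤ 2 := by
    calc ‖z ^ m - 1‖ ≤ ‖z ^ m‖ + ‖(1 : 𝕜)‖ := norm_sub_le _ _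
      _ = 2 := by rw [norm_pow, hz, norm_one]; norm_num
  have hgeom : ‖∑ i ∈ range p, (z ^ (m * p)) ^ i‖ ≤ p := by
    simpa [hz] using norm_sum_le (range p) fun i ↦ (z ^ (m * p)) ^ i
  rw [fiberShift, norm_mul, norm_mul, norm_pow, hz, one_pow, one_mul]
  gcongr

section Szabo

variable {p q r a b c : ℕ} {z : ℂ}

theorem szaboSum_ne_zero_of_pow_eq_one (hp : 1 < p) (hq : 1 < q) (hr : 1 < r)
    (hpq : p ≠ q) (hpr : p ≠ r) (hqr : q ≠ r) (hz : z ^ (p * q * r) = 1) :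
    szaboSum p q r a b c z ≠ 0 := by
  have hnorm : ‖z‖ = 1 := Complex.norm_eq_one_of_pow_eq_one hz (by positivity)
  set P := fiberShift p ((q * r) ^ 2) a z
  set Q := fiberShift q ((p * r) ^ 2) b z
  set R := fiberShift r ((p * q) ^ 2) c z
  intro h
  have hsum : ((p * q * r : ℕ) : ℂ) = -(P + Q + R) := by
    have : szaboSum p q r a b c z = (p * q * r : ℕ) + P + Q + R := by
      simp [szaboSum, hz, P, Q, R]
    linear_combination h - this
  have hle : ((p * q * r : ℕ) : ℝ) ≤ (2 * (p + q + r) : ℕ) := by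
    calc ((p * q * r : ℕ) : ℝ) = ‖P + Q + R‖ := by rw [← norm_neg, ← hsum, Complex.norm_natCast]
      _ ≤ ‖P‖ + ‖Q‖ + ‖R‖ := norm_add₃_le
      _ ≤ 2 * p + 2 * q + 2 * r := by gcongr <;> exact norm_fiberShift_le hnorm
      _ = (2 * (p + q + r) : ℕ) := by push_cast; ring
  exact (two_mul_add_add_lt_mul_mul hp hq hr hpq hpr hqr).not_ge (by exact_mod_cast hle)

theorem szaboSum_eq_zero_iff (hp : 1 < p) (hq : 1 < q) (hr : 1 < r)
    (hpq : p.Coprime q) (hpr : p.Coprime r) (hqr : q.Coprime r) (hz : z ^ (p * q * r) ^ 2 = 1) :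
    szaboSum p q r a b c z = 0 ↔ z ≠ 1 ∧
      (∑ i ∈ range p, (z ^ (q * r) ^ 2) ^ i) * (∑ i ∈ range q, (z ^ (p * r) ^ 2) ^ i) *
        (∑ i ∈ range r, (z ^ (p * q) ^ 2) ^ i) ≠ 0 := by
  have hzp : z ^ ((q * r) ^ 2 * p ^ 2) = 1 := by rw [← hz]; ring
  have hzq : z ^ ((p * r) ^ 2 * q ^ 2) = 1 := by rw [← hz]; ring
  have hzr : z ^ ((p * q) ^ 2 * r ^ 2) = 1 := by rw [← hz]; ring
  by_cases hz_pqr : z ^ (p * q * r) = 1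
  · refine iff_of_false ?_ fun ⟨hz_ne, hA⟩ ↦
      hz_ne (eq_one_of_prod_geom_sum_ne_zero hpq hpr hqr hz_pqr hA)
    exact szaboSum_ne_zero_of_pow_eq_one hp hq hr (ne_of_coprime hp hpq) (ne_of_coprime hp hpr)
      (ne_of_coprime hq hqr) hz_pqr
  · have hgeom : ∑ j ∈ range (p * q * r), (z ^ (p * q * r)) ^ j = 0 :=
      (geom_sum_eq_zero_iff (by positivity)).2 ⟨by rw [← pow_mul, ← sq, hz], hz_pqr⟩
    have hz_ne : z ≠ 1 := by rintro rfl; exact hz_pqr (one_pow _)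
    rw [szaboSum, hgeom, zero_add, fiberShift_add_add_eq_zero_iff hp hq hr hpq hpr hqr hz hz_pqr,
      fiberShift_eq_zero_iff (by lia) (by positivity) hzp,
      fiberShift_eq_zero_iff (by lia) (by positivity) hzq,
      fiberShift_eq_zero_iff (by lia) (by positivity) hzr, mul_ne_zero_iff, mul_ne_zero_iff,
      and_assoc, and_iff_right hz_ne]

end Szabo

theorem exp_two_pi_mul_I_mul_mul_div (k c : ℤ) (N : ℂ) :
    Complex.exp (2 * Real.pi * Complex.I * k * c / N) =
      (Complex.exp (2 * Real.pi * Complex.I / N) ^ k) ^ c := by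
  rw [← Complex.exp_int_mul, ← Complex.exp_int_mul]
  congr 1
  ring

theorem sum_tijB_zpow {K : Type*} [Field K] (z : K) :
    ∑ b ∈ tijB, z ^ b = szaboSum 5 3 2 90 120 150 z := by
  unfold tijB
  repeat rw [sum_insert (by decide)]
  simp only [szaboSum, fiberShift, Nat.reduceMul, sum_range_succ, sum_singleton, range_zero,
    sum_empty, zpow_ofNat]
  ring

theorem sum_tijA_zpow {K : Type*} [Field K] {z : K} (hz : z ≠ 0) :
    ∑ a ∈ tijA, z ^ a = (∑ i ∈ range 5, (z ^ 36) ^ i) * (∑ i ∈ range 3, (z ^ 100) ^ i) *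
      ∑ i ∈ range 2, (z ^ 225) ^ i := by
  have hinj : Set.InjOn (fun p : ℕ × ℕ × ℕ ↦ 36 * (p.1 : ℤ) + 100 * p.2.1 + 225 * p.2.2)
      (range 5 ×ˢ range 3 ×ˢ range 2 : Finset (ℕ × ℕ × ℕ)) := by
    rintro ⟨i, j, k⟩ h ⟨i', j', k'⟩ h' heq
    simp only [coe_product, Set.mem_prod, mem_coe, mem_range] at h h' heq
    simp only [Prod.mk.injEq]
    omega
  rw [tijA, sum_image hinj, mul_assoc, sum_mul_sum, sum_mul_sum, sum_product]
  simp_rw [sum_product, mul_sum]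
  refine sum_congr rfl fun i _ ↦ sum_congr rfl fun j _ ↦ sum_congr rfl fun k _ ↦ ?_
  rw [zpow_add₀ hz, zpow_add₀ hz, mul_assoc]
  simp only [zpow_mul, zpow_ofNat, zpow_natCast]

theorem sum_tijB_zpow_eq_zero_iff {z : ℂ} (hz : z ^ 900 = 1) :
    ∑ b ∈ tijB, z ^ b = 0 ↔ z ≠ 1 ∧ ∑ a ∈ tijA, z ^ a ≠ 0 := by
  have hz₀ : z ≠ 0 := (IsUnit.of_pow_eq_one hz (by norm_num)).ne_zero
  rw [sum_tijB_zpow, sum_tijA_zpow hz₀]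
  exact szaboSum_eq_zero_iff (by norm_num) (by norm_num) (by norm_num) (by norm_num) (by norm_num)
    (by norm_num) hz

theorem sum_tijA_zpow_eq_zero_iff {K : Type*} [Field K] [CharZero K] {z : K} (hz : z ≠ 0) :
    ∑ a ∈ tijA, z ^ a = 0 ↔
      (z ^ 180 = 1 ∧ z ^ 36 ≠ 1) ∨ (z ^ 300 = 1 ∧ z ^ 100 ≠ 1) ∨ (z ^ 450 = 1 ∧ z ^ 225 ≠ 1) := by
  rw [sum_tijA_zpow hz, mul_eq_zero, mul_eq_zero, or_assoc,
    geom_sum_eq_zero_iff (by norm_num), geom_sum_eq_zero_iff (by norm_num),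
    geom_sum_eq_zero_iff (by norm_num)]
  simp only [← pow_mul, Nat.reduceMul]

/-- For every integer `k`, the exponential sum `Σ_{b ∈ B} e^{2πi k b / 900}` vanishes
if and only if `900 ∤ k` and `Σ_{a ∈ A} e^{2πi k a / 900} ≠ 0`.  Equivalently, the set
of integers `k` with `Σ_{b ∈ B} e^{2πi k b / 900} ≠ 0` is exactly the union of `900ℤ`
with the set of `k` satisfying `(5∣k ∧ 25∤k) ∨ (3∣k ∧ 9∤k) ∨ (2∣k ∧ 4∤k)`. -/
theorem stmt4 : ∀ k : ℤ,
    ((∑ b ∈ tijB, Complex.exp (2 * Real.pi * Complex.I * k * b / 900)) = 0 ↔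
      (¬((900 : ℤ) ∣ k) ∧
        (∑ a ∈ tijA, Complex.exp (2 * Real.pi * Complex.I * k * a / 900)) ≠ 0)) ∧
    ((∑ b ∈ tijB, Complex.exp (2 * Real.pi * Complex.I * k * b / 900)) ≠ 0 ↔
      ((900 : ℤ) ∣ k ∨
        ((5 ∣ k ∧ ¬(25 ∣ k)) ∨ (3 ∣ k ∧ ¬(9 ∣ k)) ∨ (2 ∣ k ∧ ¬(4 ∣ k))))) := by
  intro k
  simp only [exp_two_pi_mul_I_mul_mul_div]
  set ζ := Complex.exp (2 * Real.pi * Complex.I / 900)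
  have hζ : IsPrimitiveRoot ζ 900 := Complex.isPrimitiveRoot_exp 900 (by norm_num)
  have pow_eq_one_iff (d m : ℕ) (hdm : 900 = d * m) : (ζ ^ k) ^ m = 1 ↔ (d : ℤ) ∣ k :=
    zpow_pow_eq_one_iff_dvd (hdm ▸ hζ) (by rintro rfl; simp at hdm) k
  have hone : ζ ^ k = 1 ↔ (900 : ℤ) ∣ k := hζ.zpow_eq_one_iff_dvd k
  have hB := sum_tijB_zpow_eq_zero_iff ((pow_eq_one_iff 1 900 rfl).2 (one_dvd k))
  have hA := sum_tijA_zpow_eq_zero_iff (zpow_ne_zero k (hζ.ne_zero (by norm_num)))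
  rw [pow_eq_one_iff 5 180 rfl, Ne, pow_eq_one_iff 25 36 rfl, pow_eq_one_iff 3 300 rfl, Ne,
    pow_eq_one_iff 9 100 rfl, pow_eq_one_iff 2 450 rfl, Ne, pow_eq_one_iff 4 225 rfl] at hA
  push_cast at hA
  rw [Ne, hone] at hB
  exact ⟨hB, by rw [Ne, hB, ← hA, not_and_or, not_not, not_not]⟩
end

section
/- Let N₁, …, N_n be positive integers and let 𝒜, ℬ ⊆ (1/N₁)ℤ × ⋯ × (1/N_n)ℤ be finite sets whose reductions modulo ℤⁿ give a factorization 𝒜̄ ⊕ ℬ̄ = ((1/N₁)ℤ/ℤ) × ⋯ × ((1/N_n)ℤ/ℤ). Then the set Ω = [0, 1/N₁] × ⋯ × [0, 1/N_n] + ℬ + 𝒜 is a fundamental domain for ℝⁿ/ℤⁿ; that is, Ω tiles ℝⁿ by the translation set ℤⁿ: the translates Ω + t, t ∈ ℤⁿ, cover ℝⁿ and any two distinct translates intersect in a Lebesgue-null set. -/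
open MeasureTheory

/-!
The box `∏ⱼ [0, rⱼ]` tiles by the grid `L = ∏ⱼ rⱼℤ`. If `A, B ⊆ L` factorize `L / Γ`, then every
element of `L` is uniquely of the form `t + d` with `t ∈ Γ` and `d ∈ A + B`. Grouping the translates
of the box by their `Γ`-component turns the tiling by `L` into a tiling of the cluster
`A + B + ∏ⱼ [0, rⱼ]` by `Γ`; the overlap of two clusters is a countable union of null sets.
-/

section Tiling

open Set Function
open scoped Pointwise

variable {G : Type*} [AddCommGroup G]

/-- `Ω` tiles `G` by the translation set `T`: the translates `t + Ω`, `t ∈ T`, cover all of `G`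
(not merely almost all of it), and distinct ones overlap in a `μ`-null set. -/
structure IsTiling [MeasurableSpace G] (μ : Measure G) (Ω T : Set G) : Prop where
  add_eq_univ : T + Ω = univ
  pairwise_aedisjoint : T.Pairwise (AEDisjoint μ on fun t => t +ᵥ Ω)

/-- The reductions of `A, B ⊆ L` modulo `Γ` give a factorization of `L / Γ`. Uniqueness is asked of
the representatives in `A` and `B`, so both sets also have to reduce injectively. -/
structure IsFactorizationMod (L Γ : AddSubgroup G) (A B : Set G) : Prop where
  left_subset : A ⊆ L
  right_subset : B ⊆ L
  existsUnique : ∀ x ∈ L, ∃! p : G × G, p.1 ∈ A ∧ p.2 ∈ B ∧ x - (p.1 + p.2) ∈ Γ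

theorem IsFactorizationMod.add_mem {L Γ : AddSubgroup G} {A B : Set G}
    (h : IsFactorizationMod L Γ A B) : ∀ a ∈ A, ∀ b ∈ B, a + b ∈ L := fun _ ha _ hb =>
  L.add_mem (h.left_subset ha) (h.right_subset hb)

theorem IsFactorizationMod.bijOn_add {L Γ : AddSubgroup G} {A B : Set G}
    (h : IsFactorizationMod L Γ A B) (hΓ : Γ ≤ L) :
    BijOn (fun p : G × G => p.1 + p.2) ((Γ : Set G) ×ˢ (A + B)) L := by
  refine ⟨?mapsTo, ?injOn, ?surjOn⟩
  case mapsTo =>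
    rintro ⟨t, _⟩ ⟨ht, a, ha, b, hb, rfl⟩
    exact L.add_mem (hΓ ht) (h.add_mem a ha b hb)
  case injOn =>
    rintro ⟨t, _⟩ ⟨ht, a, ha, b, hb, rfl⟩ ⟨t', _⟩ ⟨ht', a', ha', b', hb', rfl⟩ heq
    have hdiff : (a + b) - (a' + b') = t' - t :=
      sub_eq_sub_iff_add_eq_add.2 ((add_comm _ t).trans heq)
    have hab : (a, b) = (a', b') :=
      (h.existsUnique (a + b) (h.add_mem a ha b hb)).unique
        ⟨ha, hb, by simp only [sub_self, Γ.zero_mem]⟩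
        ⟨ha', hb', hdiff ▸ Γ.sub_mem ht' ht⟩
    obtain ⟨rfl, rfl⟩ := Prod.mk.inj hab
    exact Prod.ext (add_right_cancel heq) rfl
  case surjOn =>
    intro x hx
    obtain ⟨⟨a, b⟩, ⟨ha, hb, ht⟩, -⟩ := h.existsUnique x hx
    exact ⟨(x - (a + b), a + b), ⟨ht, add_mem_add ha hb⟩, sub_add_cancel x (a + b)⟩

theorem IsTiling.add_of_bijOn [MeasurableSpace G] {μ : Measure G} {C L S T : Set G}
    (hC : IsTiling μ C L) (hS : S.Countable)
    (h : BijOn (fun p : G × G => p.1 + p.2) (T ×ˢ S) L) : IsTiling μ (S + C) T where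
  add_eq_univ := by
    rw [← add_assoc, ← add_image_prod (s := T), h.image_eq, hC.add_eq_univ]
  pairwise_aedisjoint := by
    have vadd_add_eq (t : G) : t +ᵥ (S + C) = ⋃ s : S, (t + s) +ᵥ C := by
      rw [← vadd_eq_add, ← iUnion_vadd_set, biUnion_eq_iUnion, vadd_set_iUnion]
      simp only [vadd_vadd]
    have := hS.to_subtype
    intro t ht t' ht' hne
    simp only [onFun, vadd_add_eq, AEDisjoint.iUnion_left_iff, AEDisjoint.iUnion_right_iff]
    rintro ⟨s', hs'⟩ ⟨s, hs⟩
    have hts : (t, s) ∈ T ×ˢ S := ⟨ht, hs⟩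
    have hts' : (t', s') ∈ T ×ˢ S := ⟨ht', hs'⟩
    have hadd_ne : t + s ≠ t' + s' := fun heq => hne (congrArg Prod.fst (h.injOn hts hts' heq))
    exact hC.pairwise_aedisjoint (h.mapsTo hts) (h.mapsTo hts') hadd_ne

theorem IsTiling.add_of_isFactorizationMod [MeasurableSpace G] {μ : Measure G} {C : Set G}
    {L Γ : AddSubgroup G} [Countable L] {A B : Set G} (hC : IsTiling μ C L) (hΓ : Γ ≤ L)
    (h : IsFactorizationMod L Γ A B) : IsTiling μ (A + B + C) Γ := by
  have hsub : A + B ⊆ L := add_subset_iff.2 h.add_mem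
  exact hC.add_of_bijOn ((to_countable (L : Set G)).mono hsub) (h.bijOn_add hΓ)

variable {ι : Type*}

/-- The rectangular grid `∏ⱼ rⱼℤ`, along which the box with side lengths `rⱼ` is translated;
`ℤⁿ` is `grid 1`. -/
def grid (r : ι → ℝ) : AddSubgroup (ι → ℝ) :=
  AddSubgroup.pi univ fun j => AddSubgroup.zmultiples (r j)

theorem mem_grid_iff {r x : ι → ℝ} : x ∈ grid r ↔ ∀ j, ∃ m : ℤ, m • r j = x j := by
  simp [grid, AddSubgroup.mem_pi, AddSubgroup.mem_zmultiples_iff]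

instance countable_grid [Finite ι] (r : ι → ℝ) : Countable (grid r) := by
  have hsub : (grid r : Set (ι → ℝ)) ⊆ range fun m : ι → ℤ => fun j => m j • r j := fun x hx => by
    choose m hm using mem_grid_iff.1 hx
    exact ⟨m, funext hm⟩
  exact (countable_range _).mono hsub

theorem disjoint_Ico_of_mem_zmultiples {α : Type*} [AddCommGroup α] [PartialOrder α]
    [IsOrderedAddMonoid α] {b x y : α} (hx : x ∈ AddSubgroup.zmultiples b)
    (hy : y ∈ AddSubgroup.zmultiples b) (hne : x ≠ y) :
    Disjoint (Ico x (x + b)) (Ico y (y + b)) := by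
  obtain ⟨m, rfl⟩ := hx
  obtain ⟨k, rfl⟩ := hy
  have := pairwise_disjoint_Ico_zsmul b fun h : m = k => hne (by rw [h])
  simpa only [onFun, add_one_zsmul] using this

theorem vadd_Icc_zero_ae_eq_pi_Ico [Fintype ι] (g r : ι → ℝ) :
    (g +ᵥ Icc 0 r : Set (ι → ℝ)) =ᵐ[volume] univ.pi fun j => Ico (g j) (g j + r j) := by
  have hvadd : g +ᵥ Icc 0 r = Icc g (g + r) := by
    simpa only [← image_vadd, vadd_eq_add, add_zero] using image_const_add_Icc g 0 r
  rw [hvadd]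
  exact Measure.univ_pi_Ico_ae_eq_Icc.symm

theorem isTiling_Icc_grid [Fintype ι] {r : ι → ℝ} (hr : ∀ j, 0 < r j) :
    IsTiling volume (Icc 0 r) (grid r : Set (ι → ℝ)) where
  add_eq_univ := by
    refine eq_univ_of_forall fun x => ?_
    choose m hm using fun j => (existsUnique_sub_zsmul_mem_Ico (hr j) (x j) 0).exists
    refine mem_add.2 ⟨fun j => m j • r j, mem_grid_iff.2 fun j => ⟨m j, rfl⟩,
      fun j => x j - m j • r j, ⟨fun j => (hm j).1, fun j => ?_⟩, ?_⟩
    · simpa only [zero_add] using (hm j).2.le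
    · exact funext fun j => add_sub_cancel _ _
  pairwise_aedisjoint := by
    intro g hg g' hg' hne
    obtain ⟨j, hj⟩ := ne_iff.1 hne
    have hdisj : Disjoint (univ.pi fun j => Ico (g j) (g j + r j))
        (univ.pi fun j => Ico (g' j) (g' j + r j)) :=
      disjoint_univ_pi.2
        ⟨j, disjoint_Ico_of_mem_zmultiples (hg j (mem_univ j)) (hg' j (mem_univ j)) hj⟩
    exact hdisj.aedisjoint.congr (vadd_Icc_zero_ae_eq_pi_Ico g r) (vadd_Icc_zero_ae_eq_pi_Ico g' r)

theorem mem_grid_one_iff {x : ι → ℝ} : x ∈ grid 1 ↔ ∀ j, ∃ m : ℤ, x j = m := by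
  simp [mem_grid_iff, eq_comm]

theorem mem_grid_one_div_iff {N : ι → ℕ} {x : ι → ℝ} :
    x ∈ grid (fun j => 1 / (N j : ℝ)) ↔ ∀ j, ∃ m : ℤ, x j = m / (N j : ℝ) := by
  simp [mem_grid_iff, eq_comm, div_eq_mul_inv]

theorem grid_one_le_grid_one_div {N : ι → ℕ} (hN : ∀ j, 0 < N j) :
    grid 1 ≤ grid fun j => 1 / (N j : ℝ) := by
  intro x hx
  refine mem_grid_one_div_iff.2 fun j => ?_
  obtain ⟨m, hm⟩ := mem_grid_one_iff.1 hx j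
  have hNj : (N j : ℝ) ≠ 0 := Nat.cast_ne_zero.2 (hN j).ne'
  exact ⟨m * N j, by rw [hm]; push_cast; field_simp⟩

theorem intCast_mem_grid_one (t : ι → ℤ) : (fun j => (t j : ℝ)) ∈ grid (1 : ι → ℝ) :=
  mem_grid_one_iff.2 fun j => ⟨t j, rfl⟩

theorem IsTiling.iUnion_image_add_intCast [Fintype ι] {Ω : Set (ι → ℝ)}
    (h : IsTiling volume Ω (grid (1 : ι → ℝ) : Set (ι → ℝ))) :
    (⋃ t : ι → ℤ, (fun x => x + fun j => (t j : ℝ)) '' Ω) = univ := by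
  refine eq_univ_of_forall fun x => mem_iUnion.2 ?_
  obtain ⟨y, hy, z, hz, rfl⟩ := mem_add.1 (h.add_eq_univ ▸ mem_univ x)
  choose t ht using mem_grid_one_iff.1 hy
  obtain rfl : y = fun j => (t j : ℝ) := funext ht
  exact ⟨t, z, hz, add_comm z _⟩

theorem IsTiling.volume_inter_image_add_intCast [Fintype ι] {Ω : Set (ι → ℝ)}
    (h : IsTiling volume Ω (grid (1 : ι → ℝ) : Set (ι → ℝ))) {t t' : ι → ℤ} (hne : t ≠ t') :
    volume (((fun x => x + fun j => (t j : ℝ)) '' Ω) ∩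
      ((fun x => x + fun j => (t' j : ℝ)) '' Ω)) = 0 := by
  have hcast : (fun j => (t j : ℝ)) ≠ fun j => (t' j : ℝ) := fun heq =>
    hne (funext fun j => Int.cast_injective (congrFun heq j))
  simpa only [onFun, AEDisjoint, ← image_vadd, vadd_eq_add, add_comm] using
    h.pairwise_aedisjoint (intCast_mem_grid_one t) (intCast_mem_grid_one t') hcast

theorem add_add_Icc_eq_setOf (A B : Set (ι → ℝ)) (r : ι → ℝ) :
    A + B + Icc 0 r =
      {x | ∃ b ∈ B, ∃ a ∈ A, ∃ c : ι → ℝ, (∀ j, c j ∈ Icc 0 (r j)) ∧ x = c + b + a} := by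
  ext x
  constructor
  · rintro ⟨_, ⟨a, ha, b, hb, rfl⟩, c, hc, rfl⟩
    exact ⟨b, hb, a, ha, c, fun j => ⟨hc.1 j, hc.2 j⟩, by simp only; abel⟩
  · rintro ⟨b, hb, a, ha, c, hc, rfl⟩
    exact ⟨a + b, add_mem_add ha hb, c, ⟨fun j => (hc j).1, fun j => (hc j).2⟩,
      by simp only; abel⟩

theorem stmt7_general [Fintype ι] {r : ι → ℝ} (hr : ∀ j, 0 < r j) {Γ : AddSubgroup (ι → ℝ)}
    (hΓ : Γ ≤ grid r) {A B : Set (ι → ℝ)} (h : IsFactorizationMod (grid r) Γ A B) :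
    IsTiling volume (A + B + Icc 0 r) (Γ : Set (ι → ℝ)) :=
  (isTiling_Icc_grid hr).add_of_isFactorizationMod hΓ h

end Tiling

/-- If `𝒜, ℬ ⊆ (1/N₁)ℤ × ⋯ × (1/N_n)ℤ` are finite sets whose reductions mod `ℤⁿ` give a
factorization `𝒜̄ ⊕ ℬ̄ = ((1/N₁)ℤ/ℤ) × ⋯ × ((1/N_n)ℤ/ℤ)`, then
`Ω = [0,1/N₁] × ⋯ × [0,1/N_n] + ℬ + 𝒜` is a fundamental domain for `ℝⁿ/ℤⁿ`: the
translates `Ω + t`, `t ∈ ℤⁿ`, cover `ℝⁿ`, and distinct translates intersect in a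
Lebesgue-null set. -/
theorem stmt7 (n : ℕ) (N : Fin n → ℕ) (hN : ∀ j, 0 < N j)
    (𝒜 ℬ : Finset (Fin n → ℝ))
    (h𝒜 : ∀ a ∈ 𝒜, ∀ j, ∃ m : ℤ, a j = (m : ℝ) / (N j : ℝ))
    (hℬ : ∀ b ∈ ℬ, ∀ j, ∃ m : ℤ, b j = (m : ℝ) / (N j : ℝ))
    (hfact : ∀ x : Fin n → ℝ, (∀ j, ∃ m : ℤ, x j = (m : ℝ) / (N j : ℝ)) →
      ∃! p : (Fin n → ℝ) × (Fin n → ℝ), p.1 ∈ 𝒜 ∧ p.2 ∈ ℬ ∧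
        ∀ j, ∃ m : ℤ, x j - (p.1 j + p.2 j) = (m : ℝ))
    (Ω : Set (Fin n → ℝ))
    (hΩ : Ω = {x : Fin n → ℝ | ∃ b ∈ ℬ, ∃ a ∈ 𝒜, ∃ c : Fin n → ℝ,
      (∀ j, c j ∈ Set.Icc (0 : ℝ) (1 / (N j : ℝ))) ∧ x = c + b + a}) :
    (⋃ t : Fin n → ℤ, (fun x => x + fun j => (t j : ℝ)) '' Ω) = Set.univ ∧
    ∀ t t' : Fin n → ℤ, t ≠ t' →
      volume (((fun x => x + fun j => (t j : ℝ)) '' Ω) ∩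
        ((fun x => x + fun j => (t' j : ℝ)) '' Ω)) = 0 := by
  have hgrid : IsFactorizationMod (grid fun j => 1 / (N j : ℝ)) (grid 1)
      (𝒜 : Set (Fin n → ℝ)) ℬ :=
    { left_subset := fun a ha => mem_grid_one_div_iff.2 (h𝒜 a ha)
      right_subset := fun b hb => mem_grid_one_div_iff.2 (hℬ b hb)
      existsUnique := fun x hx => by
        simpa only [mem_grid_one_iff, Pi.sub_apply, Pi.add_apply, Finset.mem_coe] using
          hfact x (mem_grid_one_div_iff.1 hx) }
  have hpos : ∀ j, (0 : ℝ) < 1 / (N j : ℝ) := fun j => by have := hN j; positivity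
  have htiling := stmt7_general hpos (grid_one_le_grid_one_div hN) hgrid
  rw [add_add_Icc_eq_setOf] at htiling
  subst hΩ
  exact ⟨htiling.iUnion_image_add_intCast, fun _ _ => htiling.volume_inter_image_add_intCast⟩
end

section
/- Let 𝒯_B = ℤ + (1/900)B ⊆ ℝ. Then Λ_B = 900ℤ + B is a universal spectrum for 𝒯_B: every measurable set Ω ⊆ ℝ of finite positive Lebesgue measure that tiles ℝ by the translation set 𝒯_B has Λ_B as a spectrum. -/
open MeasureTheory

/-- `Ω` tiles `ℝ` by the translation set `T`: the translates `Ω + t`, `t ∈ T`, cover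
`ℝ` up to a Lebesgue-null set, and distinct translates intersect in null sets. -/
def Tiles1 (Ω : Set ℝ) (T : Set ℝ) : Prop :=
  volume (Set.univ \ ⋃ t ∈ T, (fun x => x + t) '' Ω) = 0 ∧
  ∀ t ∈ T, ∀ t' ∈ T, t ≠ t' →
    volume (((fun x => x + t) '' Ω) ∩ ((fun x => x + t') '' Ω)) = 0

/-- `Λ` is a spectrum for `Ω ⊆ ℝ`: the exponentials `x ↦ e^{2πiλx}`, `λ ∈ Λ`, regarded
as elements of `L²` of Lebesgue measure restricted to `Ω`, are pairwise orthogonal and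
their linear span is dense. -/
def IsSpectrum1 (Ω : Set ℝ) (Λ : Set ℝ) : Prop :=
  (∀ l₁ ∈ Λ, ∀ l₂ ∈ Λ, l₁ ≠ l₂ →
    ∫ x in Ω, Complex.exp (2 * Real.pi * Complex.I * (l₁ : ℂ) * (x : ℂ)) *
      (starRingEnd ℂ) (Complex.exp (2 * Real.pi * Complex.I * (l₂ : ℂ) * (x : ℂ))) = 0) ∧
  (Submodule.span ℂ {f : Lp ℂ 2 (volume.restrict Ω) |
      ∃ l ∈ Λ, ∀ᵐ x ∂(volume.restrict Ω),
        f x = Complex.exp (2 * Real.pi * Complex.I * (l : ℂ) * (x : ℂ))}).topologicalClosure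
    = ⊤

/-!
For almost every `x`, the trace of a tile `Ω` on the coset `x + (1/N)ℤ` maps injectively onto a
tiling complement `A` of `B` modulo `N`. The discrete Fourier transforms of `A` and `B` have product
zero away from `0`, so if that of `B` vanishes nowhere on `(L - L) \ {0}` and `|A| = |L|`, then the
characters indexed by `L` are orthogonal on `A`. Their matrix being square, the characters indexed
by `A` are also orthogonal on `L`. Folding integrals over `Ω` modulo `(1/N)ℤ` turns the first
orthogonality into that of the exponentials with frequencies in `Nℤ + L`. The second recovers from
`f ⊥ Nℤ + L` the integral of `f` over any part of `Ω` lying in an interval of length `1/N`.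

For `N = 900` and `B = L` the Fourier transform of `B` is seen to be nonzero by reducing
`ℤ[ζ₉₀₀]` modulo a prime above `1801`.
-/

section FiniteDuality

variable {N : ℕ} [NeZero N]

/-- The Fourier transform `k ↦ ∑_{a ∈ A} e^{2πiak/N}` of the indicator function of a set of
residues `A`. -/
noncomputable def charSum (A : Finset (ZMod N)) (k : ZMod N) : ℂ :=
  ∑ a ∈ A, ZMod.stdAddChar (a * k)

lemma charSum_zero (A : Finset (ZMod N)) : charSum A 0 = A.card := by
  simp [charSum]

/-- `L` is a spectrum of the set of residues `A`: the characters indexed by `L` form an orthogonal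
basis of the functions on `A`, where the basis property is encoded as equality of cardinalities. -/
def IsSpectralPair (A L : Finset (ZMod N)) : Prop :=
  A.card = L.card ∧ ∀ l ∈ L, ∀ l' ∈ L, l ≠ l' → charSum A (l - l') = 0

lemma IsSpectralPair.charSum_sub {A L : Finset (ZMod N)} (h : IsSpectralPair A L)
    {l l' : ZMod N} (hl : l ∈ L) (hl' : l' ∈ L) :
    charSum A (l - l') = if l = l' then (L.card : ℂ) else 0 := by
  split_ifs with heq
  · rw [heq, sub_self, charSum_zero, h.1]
  · exact h.2 l hl l' hl' heq

/-- The rows of a square matrix are orthogonal if and only if its columns are. -/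
theorem IsSpectralPair.symm {A L : Finset (ZMod N)} (h : IsSpectralPair A L) :
    IsSpectralPair L A := by
  refine ⟨h.1.symm, fun a ha a' ha' hne => ?_⟩
  have hL : (L.card : ℂ) ≠ 0 := by
    rw [← h.1]; exact_mod_cast (Finset.card_pos.mpr ⟨a, ha⟩).ne'
  let rows : Matrix L A ℂ := fun l a => ZMod.stdAddChar (a.1 * l.1)
  let columns : Matrix A L ℂ := fun a l => (L.card : ℂ)⁻¹ * ZMod.stdAddChar (-(a.1 * l.1))
  have rows_mul_columns : rows * columns = 1 := by
    ext l l'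
    have hsum : ∑ a : A, rows l a * columns a l' = (L.card : ℂ)⁻¹ * charSum A (l - l') := by
      rw [charSum, Finset.mul_sum, ← Finset.sum_coe_sort A]
      refine Finset.sum_congr rfl fun a _ => ?_
      rw [mul_left_comm, ← AddChar.map_add_eq_mul, ← sub_eq_add_neg, ← mul_sub]
    rw [Matrix.mul_apply, hsum, h.charSum_sub l.2 l'.2, Matrix.one_apply]
    by_cases heq : l = l' <;> simp [heq, hL]
  have columns_mul_rows : columns * rows = 1 :=
    (Matrix.mul_eq_one_comm_of_card_eq _ _ _ (by simpa using h.1.symm)).mp rows_mul_columns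
  have hentry := congrFun₂ columns_mul_rows ⟨a', ha'⟩ ⟨a, ha⟩
  have hsum : ∑ l : L, columns ⟨a', ha'⟩ l * rows l ⟨a, ha⟩
      = (L.card : ℂ)⁻¹ * charSum L (a - a') := by
    rw [charSum, Finset.mul_sum, ← Finset.sum_coe_sort L]
    refine Finset.sum_congr rfl fun l _ => ?_
    rw [mul_assoc, ← AddChar.map_add_eq_mul]
    congr 2
    ring
  rw [Matrix.mul_apply, hsum, Matrix.one_apply_ne (by simpa [eq_comm] using hne)] at hentry
  exact (mul_eq_zero.mp hentry).resolve_left (inv_ne_zero hL)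

lemma charSum_mul_charSum_of_isComplement {A B : Finset (ZMod N)}
    (h : AddSubgroup.IsComplement (A : Set (ZMod N)) B) {k : ZMod N} (hk : k ≠ 0) :
    charSum A k * charSum B k = 0 :=
  calc charSum A k * charSum B k
      = ∑ p : A × B, ZMod.stdAddChar ((p.1.1 + p.2.1) * k) := by
        rw [charSum, charSum, ← Finset.sum_coe_sort A, ← Finset.sum_coe_sort B,
          Fintype.sum_mul_sum, Fintype.sum_prod_type]
        simp only [add_mul, AddChar.map_add_eq_mul]
    _ = ∑ g : ZMod N, ZMod.stdAddChar (g * k) :=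
        Function.Bijective.sum_comp h fun g => ZMod.stdAddChar (g * k)
    _ = 0 := by
        rw [AddChar.sum_mulShift k (ZMod.isPrimitive_stdAddChar N), if_neg hk, Nat.cast_zero]

theorem isSpectralPair_of_isComplement {A B L : Finset (ZMod N)}
    (hAB : AddSubgroup.IsComplement (A : Set (ZMod N)) B) (hcard : B.card * L.card = N)
    (hB : ∀ l ∈ L, ∀ l' ∈ L, l ≠ l' → charSum B (l - l') ≠ 0) : IsSpectralPair A L := by
  have hcardAB : A.card * B.card = N := by simpa using hAB.card_mul_card
  have hBpos : 0 < B.card := Nat.pos_of_mul_pos_left (hcardAB ▸ NeZero.pos N)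
  refine ⟨Nat.eq_of_mul_eq_mul_right hBpos (by rw [hcardAB, mul_comm, hcard]), ?_⟩
  intro l hl l' hl' hne
  have hmul := charSum_mul_charSum_of_isComplement hAB (sub_ne_zero.mpr hne)
  exact (mul_eq_zero.mp hmul).resolve_right (hB l hl l' hl' hne)

end FiniteDuality

section CyclotomicReduction

open Polynomial

theorem aeval_ne_zero_of_eval₂_ne_zero {n : ℕ} (hn : 0 < n) {ζ : ℂ} (hζ : IsPrimitiveRoot ζ n)
    {R : Type*} [CommRing R] [IsDomain R] {ω : R} (hω : IsPrimitiveRoot ω n) {P : ℤ[X]}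
    (hP : P.eval₂ (Int.castRingHom R) ω ≠ 0) : aeval ζ P ≠ 0 := by
  intro hroot
  have hdvd : cyclotomic n ℤ ∣ P := by
    rw [cyclotomic_eq_minpoly hζ hn]
    exact minpoly.isIntegrallyClosed_dvd (hζ.isIntegral hn) hroot
  have hcyc : (cyclotomic n ℤ).eval₂ (Int.castRingHom R) ω = 0 := by
    rw [← eval_map, map_cyclotomic]
    exact hω.isRoot_cyclotomic hn
  exact hP (eval₂_eq_zero_of_dvd_of_eval₂_eq_zero _ _ hdvd hcyc)

lemma isPrimitiveRoot_stdAddChar_one {N : ℕ} [NeZero N] :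
    IsPrimitiveRoot (ZMod.stdAddChar (1 : ZMod N)) N := by
  have h := Complex.isPrimitiveRoot_exp N (NeZero.ne N)
  have := ZMod.stdAddChar_coe (N := N) 1
  simp only [Int.cast_one, mul_one] at this
  rwa [this]

theorem charSum_ne_zero_of_sum_pow_ne_zero {N : ℕ} [NeZero N] {R : Type*} [CommRing R] [IsDomain R]
    {ω : R} (hω : IsPrimitiveRoot ω N) {B : Finset (ZMod N)} {k : ZMod N}
    (h : ∑ b ∈ B, ω ^ (b * k).val ≠ 0) : charSum B k ≠ 0 := by
  have := aeval_ne_zero_of_eval₂_ne_zero (NeZero.pos N) isPrimitiveRoot_stdAddChar_one hω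
    (P := ∑ b ∈ B, X ^ (b * k).val) (by simpa [eval₂_finsetSum] using h)
  simpa [charSum, ← AddChar.map_nsmul_eq_pow] using this

end CyclotomicReduction

section Exponential

/-- The exponential `x ↦ e^{2πilx}` of frequency `l`. -/
noncomputable def exponential (l x : ℝ) : ℂ :=
  Complex.exp (2 * Real.pi * Complex.I * l * x)

lemma exponential_add_left (l l' x : ℝ) :
    exponential (l + l') x = exponential l x * exponential l' x := by
  rw [exponential, exponential, exponential, ← Complex.exp_add]
  congr 1
  push_cast
  ring

lemma exponential_add_right (l x y : ℝ) :
    exponential l (x + y) = exponential l x * exponential l y := by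
  rw [exponential, exponential, exponential, ← Complex.exp_add]
  congr 1
  push_cast
  ring

lemma conj_exponential (l x : ℝ) : starRingEnd ℂ (exponential l x) = exponential (-l) x := by
  rw [exponential, exponential, ← Complex.exp_conj]
  congr 1
  simp [map_ofNat]

@[simp]
lemma norm_exponential (l x : ℝ) : ‖exponential l x‖ = 1 := by
  simp [exponential, Complex.norm_exp]

@[fun_prop]
lemma continuous_exponential (l : ℝ) : Continuous (exponential l) := by
  unfold exponential
  fun_prop

lemma memLp_exponential (l : ℝ) (p : ENNReal) (μ : Measure ℝ) [IsFiniteMeasure μ] :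
    MemLp (exponential l) p μ :=
  MemLp.of_bound (continuous_exponential l).aestronglyMeasurable 1 (by simp)

lemma exponential_mul_conj (l l' x : ℝ) :
    exponential l x * starRingEnd ℂ (exponential l' x) = exponential (l - l') x := by
  rw [conj_exponential, ← exponential_add_left, sub_eq_add_neg]

lemma exponential_intCast_div {N : ℕ} [NeZero N] (k n : ℤ) :
    exponential k (n / N) = ZMod.stdAddChar ((n : ZMod N) * (k : ZMod N)) := by
  rw [← Int.cast_mul, ZMod.stdAddChar_coe, exponential]
  congr 1
  push_cast
  ring

lemma fourier_one_div_coe {N : ℕ} (k : ℤ) (x : ℝ) :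
    fourier k (x : AddCircle (1 / N : ℝ)) = exponential (N * k) x := by
  rw [fourier_coe_apply, exponential]
  congr 1
  push_cast
  rw [div_div_eq_mul_div, div_one]
  ring

lemma integral_exponential_of_eq_one {l p : ℝ} (hl : l ≠ 0) (hp : exponential l p = 1) :
    ∫ x in 0..p, exponential l x = 0 := by
  have hc : 2 * Real.pi * Complex.I * l ≠ 0 :=
    mul_ne_zero Complex.two_pi_I_ne_zero (by exact_mod_cast hl)
  have h := integral_exp_mul_complex (a := 0) (b := p) hc
  rw [show Complex.exp (2 * Real.pi * Complex.I * l * p) = 1 from hp] at h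
  simpa [exponential] using h

end Exponential

section Periodization

theorem integral_eq_intervalIntegral_tsum_add_int {E : Type*} [NormedAddCommGroup E]
    [NormedSpace ℝ E] {f : ℝ → E} (hf : Integrable f) :
    ∫ x, f x = ∫ x in 0..1, ∑' n : ℤ, f (x + n) := by
  have hsummable : Summable fun n : ℤ => ∫ x in Set.Ioc (0 : ℝ) 1, ‖f (x + n)‖ := by
    simpa only [intervalIntegral.integral_of_le zero_le_one]
      using hf.norm.hasSum_intervalIntegral_comp_add_int.summable
  rw [intervalIntegral.integral_of_le zero_le_one,
    ← integral_tsum_of_summable_integral_norm (F := fun (n : ℤ) x => f (x + n))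
      (fun n => (hf.comp_add_right (n : ℝ)).integrableOn) hsummable,
    ← hf.hasSum_intervalIntegral_comp_add_int.tsum_eq]
  simp only [intervalIntegral.integral_of_le zero_le_one]

theorem integral_eq_intervalIntegral_tsum_add_int_mul {E : Type*} [NormedAddCommGroup E]
    [NormedSpace ℝ E] {f : ℝ → E} (hf : Integrable f) {p : ℝ} (hp : 0 < p) :
    ∫ x, f x = ∫ x in 0..p, ∑' n : ℤ, f (x + n * p) := by
  have hscale := integral_eq_intervalIntegral_tsum_add_int (hf.comp_mul_left' hp.ne')
  calc ∫ x, f x = p • ∫ x, f (p * x) := by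
        rw [Measure.integral_comp_mul_left, abs_of_pos (inv_pos.mpr hp), smul_inv_smul₀ hp.ne']
    _ = p • ∫ x in 0..1, ∑' n : ℤ, f (p * x + n * p) := by
        rw [hscale]
        simp only [mul_add, mul_comm p (Int.cast _)]
    _ = ∫ x in 0..p, ∑' n : ℤ, f (x + n * p) := by
        rw [intervalIntegral.smul_integral_comp_mul_left (fun x => ∑' n : ℤ, f (x + n * p)),
          mul_zero, mul_one]

lemma measurable_liftIoc {p : ℝ} [Fact (0 < p)] {α : Type*} [MeasurableSpace α] (a : ℝ)
    {f : ℝ → α} (hf : Measurable f) :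
    Measurable (AddCircle.liftIoc p a f) :=
  (hf.comp measurable_subtype_coe).comp (AddCircle.measurableEquivIoc p a).measurable

lemma exists_liftIoc_coe_eq {p : ℝ} [hp : Fact (0 < p)] {α : Type*} (a x : ℝ) :
    ∃ n : ℤ, x + n * p ∈ Set.Ioc a (a + p) ∧
      ∀ f : ℝ → α, AddCircle.liftIoc p a f (x : AddCircle p) = f (x + n * p) := by
  obtain ⟨n, hn, -⟩ := existsUnique_add_zsmul_mem_Ioc hp.out x a
  rw [zsmul_eq_mul] at hn
  refine ⟨n, hn, fun f => ?_⟩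
  rw [← AddCircle.liftIoc_coe_apply (f := f) hn, ← zsmul_eq_mul, AddCircle.coe_add,
    AddCircle.coe_zsmul, AddCircle.coe_period, zsmul_zero, add_zero]

lemma inner_toLp_star {α : Type*} [MeasurableSpace α] {μ : Measure α} {g h : α → ℂ}
    (hg : MemLp g 2 μ) (hh : MemLp h 2 μ) :
    inner ℂ (hg.star.toLp (star g)) (hh.toLp h) = ∫ x, g x * h x ∂μ := by
  rw [L2.inner_def]
  refine integral_congr_ae ?_
  filter_upwards [hg.star.coeFn_toLp, hh.coeFn_toLp] with x hgx hhx
  rw [hgx, hhx, RCLike.inner_apply, mul_comm]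
  simp

theorem integral_mul_comp_coe_eq_zero {p : ℝ} [Fact (0 < p)] {μ : Measure ℝ} [IsFiniteMeasure μ]
    {g : ℝ → ℂ} (hg : MemLp g 2 μ)
    (hfourier : ∀ k : ℤ, ∫ x, g x * fourier k (x : AddCircle p) ∂μ = 0)
    {φ : AddCircle p → ℂ} (hφ : MemLp φ 2 (μ.map ((↑) : ℝ → AddCircle p))) :
    ∫ x, g x * φ (x : AddCircle p) ∂μ = 0 := by
  let q : ℝ → AddCircle p := (↑)
  let ν : Measure (AddCircle p) := μ.map q
  have hq : MeasurePreserving q μ ν := ⟨AddCircle.measurable_mk', rfl⟩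
  have : IsFiniteMeasure ν := Measure.isFiniteMeasure_map μ q
  let pairing : Lp ℂ 2 ν →L[ℂ] ℂ := (innerSL ℂ (hg.star.toLp (star g))).comp
    (Lp.compMeasurePreservingₗᵢ ℂ q hq).toContinuousLinearMap
  have pairing_toLp {ψ : AddCircle p → ℂ} (hψ : MemLp ψ 2 ν) :
      pairing (hψ.toLp ψ) = ∫ x, g x * ψ (x : AddCircle p) ∂μ :=
    inner_toLp_star hg (hψ.comp_measurePreserving hq)
  have pairing_eq_zero_on_trig :
      (Submodule.span ℂ (Set.range (@fourier p))).map
        (ContinuousMap.toLp 2 ν ℂ : C(AddCircle p, ℂ) →L[ℂ] Lp ℂ 2 ν).toLinearMap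
        ≤ pairing.ker := by
    rw [Submodule.map_span_le]
    rintro _ ⟨k, rfl⟩
    exact (pairing_toLp ((fourier k).memLp ν ℂ)).trans (hfourier k)
  have trig_dense := (ContinuousMap.toLp_denseRange ℂ ν ℂ (p := 2)
    (by norm_num)).topologicalClosure_map_submodule (span_fourier_closure_eq_top (T := p))
  have pairing_ker : pairing.ker = ⊤ := top_unique (trig_dense ▸
    Submodule.topologicalClosure_minimal _ pairing_eq_zero_on_trig pairing.isClosed_ker)
  rw [← pairing_toLp hφ]
  exact LinearMap.mem_ker.mp (pairing_ker ▸ Submodule.mem_top)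

end Periodization

section Tiling

lemma Tiles1.ae_existsUnique {Ω T : Set ℝ} (h : Tiles1 Ω T) (hT : T.Countable) :
    ∀ᵐ x : ℝ, ∃! t, t ∈ T ∧ x - t ∈ Ω := by
  have mem_translate (x t : ℝ) : x ∈ (fun y => y + t) '' Ω ↔ x - t ∈ Ω := by
    simp [sub_eq_add_neg]
  have hcover : ∀ᵐ x : ℝ, ∃ t ∈ T, x - t ∈ Ω := by
    filter_upwards [mem_ae_iff.mpr ((Set.compl_eq_univ_sdiff _).symm ▸ h.1)] with x hx
    simpa only [Set.mem_iUnion₂, mem_translate, exists_prop] using hx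
  have hdisjoint : ∀ᵐ x : ℝ, ∀ t ∈ T, ∀ t' ∈ T, t ≠ t' → ¬ (x - t ∈ Ω ∧ x - t' ∈ Ω) := by
    refine (ae_ball_iff hT).mpr fun t ht => (ae_ball_iff hT).mpr fun t' ht' => ?_
    refine Filter.eventually_imp_distrib_left.mpr fun hne => ?_
    filter_upwards [measure_eq_zero_iff_ae_notMem.mp (h.2 t ht t' ht' hne)] with x hx
    simpa only [Set.mem_inter_iff, mem_translate] using hx
  filter_upwards [hcover, hdisjoint] with x ⟨t, ht, hxt⟩ hx
  refine ⟨t, ⟨ht, hxt⟩, fun t' ⟨ht', hxt'⟩ => ?_⟩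
  by_contra hne
  exact hx t' ht' t ht hne ⟨hxt', hxt⟩

variable {N : ℕ}

/-- The translation set `ℤ + B/N`. -/
def translationSet (B : Finset (ZMod N)) : Set ℝ :=
  (fun m : ℤ => (m / N : ℝ)) '' {m | (m : ZMod N) ∈ B}

/-- The set of frequencies `Nℤ + L`. -/
def frequencySet (L : Finset (ZMod N)) : Set ℝ :=
  (fun m : ℤ => (m : ℝ)) '' {m | (m : ZMod N) ∈ L}

lemma intCast_mem_image_intCast_iff {B : Finset ℤ} {m : ℤ} :
    (m : ZMod N) ∈ B.image (Int.cast : ℤ → ZMod N) ↔ ∃ t : ℤ, ∃ a ∈ B, m = N * t + a := by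
  have hmod (a : ℤ) : (a : ZMod N) = m ↔ ∃ t : ℤ, m = N * t + a := by
    simp only [ZMod.intCast_eq_intCast_iff_dvd_sub, dvd_iff_exists_eq_mul_right,
      sub_eq_iff_eq_add]
  simp only [Finset.mem_image, hmod]
  exact ⟨fun ⟨a, ha, t, h⟩ => ⟨t, a, ha, h⟩, fun ⟨t, a, ha, h⟩ => ⟨a, ha, t, h⟩⟩

lemma frequencySet_image_intCast (B : Finset ℤ) :
    frequencySet (B.image (Int.cast : ℤ → ZMod N))
      = {x : ℝ | ∃ t : ℤ, ∃ a ∈ B, x = N * (t : ℝ) + (a : ℝ)} := by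
  ext x
  simp only [frequencySet, Set.mem_image, Set.mem_ofPred_eq, intCast_mem_image_intCast_iff]
  constructor
  · rintro ⟨_, ⟨t, a, ha, rfl⟩, rfl⟩
    exact ⟨t, a, ha, by push_cast; rfl⟩
  · rintro ⟨t, a, ha, rfl⟩
    exact ⟨_, ⟨t, a, ha, rfl⟩, by push_cast; rfl⟩

lemma translationSet_eq_image_frequencySet (B : Finset (ZMod N)) :
    translationSet B = (· / (N : ℝ)) '' frequencySet B := by
  simp only [translationSet, frequencySet, Set.image_image]

lemma translationSet_image_intCast [NeZero N] (B : Finset ℤ) :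
    translationSet (B.image (Int.cast : ℤ → ZMod N))
      = {x : ℝ | ∃ t : ℤ, ∃ a ∈ B, x = (t : ℝ) + (a : ℝ) / N} := by
  have hN : (N : ℝ) ≠ 0 := NeZero.ne _
  have hdiv (t a : ℝ) : (N * t + a) / N = t + a / N := by field_simp
  rw [translationSet_eq_image_frequencySet, frequencySet_image_intCast]
  ext x
  constructor
  · rintro ⟨_, ⟨t, a, ha, rfl⟩, rfl⟩
    exact ⟨t, a, ha, hdiv t a⟩
  · rintro ⟨t, a, ha, rfl⟩
    exact ⟨_, ⟨t, a, ha, rfl⟩, hdiv t a⟩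

/-- The trace of `Ω` on the coset `x + (1/N)ℤ`, as a set of integers. -/
def fibre (N : ℕ) (Ω : Set ℝ) (x : ℝ) : Set ℤ := {n | x + n / N ∈ Ω}

lemma eq_and_eq_of_intCast_add_eq {A : Set ℤ} {B : Finset (ZMod N)}
    (h : ∀ j : ℤ, ∃! m : ℤ, (m : ZMod N) ∈ B ∧ j - m ∈ A) {n n' : ℤ} (hn : n ∈ A) (hn' : n' ∈ A)
    {b b' : ZMod N} (hb : b ∈ B) (hb' : b' ∈ B) (heq : (n : ZMod N) + b = n' + b') :
    n = n' ∧ b = b' := by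
  obtain ⟨m, rfl⟩ := ZMod.intCast_surjective b
  have hb'_eq : b' = ((n + m - n' : ℤ) : ZMod N) := by
    push_cast
    rw [heq, add_sub_cancel_left]
  have hm : m = n + m - n' := (h (n + m)).unique ⟨hb, by simpa using hn⟩
    ⟨hb'_eq ▸ hb', by simpa using hn'⟩
  exact ⟨by linarith, by rw [hb'_eq, ← hm]⟩

variable [NeZero N]

/-- The set of integers `A` is finite, its elements are distinct modulo `N`, and their residues
have spectrum `L`. -/
def IsIntSpectralPair (A : Set ℤ) (L : Finset (ZMod N)) : Prop :=
  ∃ F : Finset ℤ, (F : Set ℤ) = A ∧ Set.InjOn (Int.cast : ℤ → ZMod N) F ∧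
    IsSpectralPair (F.image (↑)) L

lemma Tiles1.ae_existsUnique_fibre {Ω : Set ℝ} {B : Finset (ZMod N)}
    (h : Tiles1 Ω (translationSet B)) :
    ∀ᵐ x : ℝ, ∀ j : ℤ, ∃! m : ℤ, (m : ZMod N) ∈ B ∧ j - m ∈ fibre N Ω x := by
  have hN : (N : ℝ) ≠ 0 := NeZero.ne _
  refine ae_all_iff.mpr fun j => ?_
  have hshift := (measurePreserving_add_right (volume : Measure ℝ) (j / N)).quasiMeasurePreserving
  filter_upwards [hshift.ae (h.ae_existsUnique ((Set.to_countable _).image _))] with x hx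
  have mem_fibre_iff (m : ℤ) : j - m ∈ fibre N Ω x ↔ x + j / N - m / N ∈ Ω := by
    rw [fibre, Set.mem_ofPred_eq, Int.cast_sub, sub_div, add_sub_assoc]
  simp only [mem_fibre_iff]
  obtain ⟨_, ⟨⟨m, hm, rfl⟩, hmΩ⟩, hunique⟩ := hx
  refine ⟨m, ⟨hm, hmΩ⟩, fun m' ⟨hm', hmΩ'⟩ => ?_⟩
  have := hunique _ ⟨⟨m', hm', rfl⟩, hmΩ'⟩
  exact_mod_cast (div_left_inj' hN).mp this

lemma exists_finset_isComplement_of_existsUnique {A : Set ℤ} {B : Finset (ZMod N)}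
    (h : ∀ j : ℤ, ∃! m : ℤ, (m : ZMod N) ∈ B ∧ j - m ∈ A) :
    ∃ F : Finset ℤ, (F : Set ℤ) = A ∧ Set.InjOn (Int.cast : ℤ → ZMod N) F ∧
      AddSubgroup.IsComplement ((F.image (↑) : Finset (ZMod N)) : Set (ZMod N)) B := by
  obtain ⟨m, ⟨hm, -⟩, -⟩ := h 0
  have hinj : Set.InjOn (Int.cast : ℤ → ZMod N) A := fun n hn n' hn' heq =>
    (eq_and_eq_of_intCast_add_eq h hn hn' hm hm (by rw [heq])).1
  have hfinite : A.Finite := .of_injOn (Set.mapsTo_univ _ _) hinj Set.finite_univ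
  obtain ⟨F, rfl⟩ := hfinite.exists_finset_coe
  refine ⟨F, rfl, hinj, ?_, fun g => ?_⟩
  · rintro ⟨⟨a, ha⟩, b, hb⟩ ⟨⟨a', ha'⟩, b', hb'⟩ heq
    obtain ⟨n, hn, rfl⟩ := Finset.mem_image.mp ha
    obtain ⟨n', hn', rfl⟩ := Finset.mem_image.mp ha'
    obtain ⟨rfl, rfl⟩ := eq_and_eq_of_intCast_add_eq h hn hn' hb hb' heq
    rfl
  · obtain ⟨j, rfl⟩ := ZMod.intCast_surjective g
    obtain ⟨m, ⟨hm, hjm⟩, -⟩ := h j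
    exact ⟨⟨⟨_, Finset.mem_coe.mpr (Finset.mem_image_of_mem _ hjm)⟩, _, hm⟩, by simp⟩

theorem Tiles1.ae_isIntSpectralPair_fibre {Ω : Set ℝ} {B L : Finset (ZMod N)}
    (h : Tiles1 Ω (translationSet B)) (hcard : B.card * L.card = N)
    (hB : ∀ l ∈ L, ∀ l' ∈ L, l ≠ l' → charSum B (l - l') ≠ 0) :
    ∀ᵐ x : ℝ, IsIntSpectralPair (fibre N Ω x) L := by
  filter_upwards [h.ae_existsUnique_fibre] with x hx
  obtain ⟨F, hF, hinj, hcompl⟩ := exists_finset_isComplement_of_existsUnique hx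
  exact ⟨F, hF, hinj, isSpectralPair_of_isComplement hcompl hcard hB⟩

end Tiling

section Orthogonality

variable {N : ℕ} [NeZero N]

lemma IsIntSpectralPair.tsum_indicator {A : Set ℤ} {L : Finset (ZMod N)}
    (h : IsIntSpectralPair A L) {l l' : ZMod N} (hl : l ∈ L) (hl' : l' ∈ L) :
    ∑' n : ℤ, A.indicator (fun n => (ZMod.stdAddChar ((n : ZMod N) * (l - l')) : ℂ)) n
      = if l = l' then (L.card : ℂ) else 0 := by
  obtain ⟨F, rfl, hinj, hpair⟩ := h
  rw [← hpair.charSum_sub hl hl', charSum, Finset.sum_image hinj, ← tsum_subtype]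
  exact Finset.tsum_subtype' F fun n : ℤ => (ZMod.stdAddChar ((n : ZMod N) * (l - l')) : ℂ)

lemma tsum_indicator_exponential (Ω : Set ℝ) (k : ℤ) (x : ℝ) :
    ∑' n : ℤ, Ω.indicator (exponential k) (x + n * (1 / N))
      = exponential k x * ∑' n : ℤ, (fibre N Ω x).indicator
          (fun n => (ZMod.stdAddChar ((n : ZMod N) * (k : ZMod N)) : ℂ)) n := by
  rw [← tsum_mul_left]
  refine tsum_congr fun n => ?_
  rw [mul_one_div]
  by_cases hn : n ∈ fibre N Ω x
  · rw [Set.indicator_of_mem hn, Set.indicator_of_mem (show x + n / N ∈ Ω from hn),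
      exponential_add_right, exponential_intCast_div]
  · rw [Set.indicator_of_notMem hn, Set.indicator_of_notMem (show x + n / N ∉ Ω from hn), mul_zero]

theorem setIntegral_exponential_sub_eq_zero {Ω : Set ℝ} (hΩ : MeasurableSet Ω)
    (hfin : volume Ω < ⊤) {L : Finset (ZMod N)}
    (hfibre : ∀ᵐ x : ℝ, IsIntSpectralPair (fibre N Ω x) L) {m m' : ℤ} (hm : (m : ZMod N) ∈ L)
    (hm' : (m' : ZMod N) ∈ L) (hne : m ≠ m') :
    ∫ x in Ω, exponential (m - m' : ℤ) x = 0 := by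
  have : IsFiniteMeasure (volume.restrict Ω) := isFiniteMeasure_restrict.mpr hfin.ne
  have hint : Integrable (Ω.indicator (exponential (m - m' : ℤ))) :=
    (integrable_indicator_iff hΩ).mpr ((memLp_exponential _ 1 _).integrable le_rfl)
  calc ∫ x in Ω, exponential (m - m' : ℤ) x
      = ∫ x in 0..(1 / N : ℝ),
          ∑' n : ℤ, Ω.indicator (exponential (m - m' : ℤ)) (x + n * (1 / N)) := by
        rw [← integral_indicator hΩ, integral_eq_intervalIntegral_tsum_add_int_mul hint
          (one_div_pos.mpr (Nat.cast_pos.mpr (NeZero.pos N)))]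
    _ = ∫ x in 0..(1 / N : ℝ), exponential (m - m' : ℤ) x *
          if (m : ZMod N) = m' then (L.card : ℂ) else 0 := by
        refine intervalIntegral.integral_congr_ae ?_
        filter_upwards [hfibre] with x hx _
        rw [tsum_indicator_exponential, Int.cast_sub (R := ZMod N), hx.tsum_indicator hm hm']
    _ = 0 := by
        split_ifs with hres
        · have hperiod : exponential (m - m' : ℤ) (1 / N) = 1 := by
            have := exponential_intCast_div (N := N) (m - m') 1
            simpa [hres] using this
          rw [intervalIntegral.integral_mul_const,
            integral_exponential_of_eq_one (by exact_mod_cast sub_ne_zero.mpr hne) hperiod,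
            zero_mul]
        · simp

end Orthogonality

section Completeness

variable {N : ℕ} [NeZero N]

lemma IsIntSpectralPair.charSum_eq_zero {A : Set ℤ} {L : Finset (ZMod N)}
    (h : IsIntSpectralPair A L) {n n' : ℤ} (hn : n ∈ A) (hn' : n' ∈ A) (hne : n ≠ n') :
    charSum L (n - n') = 0 := by
  obtain ⟨F, rfl, hinj, hpair⟩ := h
  exact hpair.symm.2 _ (Finset.mem_image_of_mem _ hn) _ (Finset.mem_image_of_mem _ hn')
    fun heq => hne (hinj hn hn' heq)

lemma sum_conj_exponential_mul_exponential_add (L : Finset (ZMod N)) (x : ℝ) (n : ℤ) :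
    ∑ l ∈ L, starRingEnd ℂ (exponential l.val x) * exponential l.val (x + n / N)
      = charSum L n := by
  refine Finset.sum_congr rfl fun l _ => ?_
  have h := exponential_intCast_div (N := N) l.val n
  rw [Int.cast_natCast, Int.cast_natCast, ZMod.natCast_zmod_val, mul_comm] at h
  rw [exponential_add_right, ← mul_assoc, mul_comm (starRingEnd ℂ _), exponential_mul_conj,
    sub_self, h]
  simp [exponential]

instance fact_one_div_pos : Fact (0 < (1 / N : ℝ)) :=
  ⟨one_div_pos.mpr (Nat.cast_pos.mpr (NeZero.pos N))⟩

theorem sum_conj_exponential_mul_liftIoc {Ω S : Set ℝ} {a x : ℝ} {L : Finset (ZMod N)}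
    (hSΩ : S ⊆ Ω) (hSI : S ⊆ Set.Ioc a (a + 1 / N)) (hx : x ∈ Ω)
    (hfibre : IsIntSpectralPair (fibre N Ω x) L) :
    ∑ l ∈ L, starRingEnd ℂ (exponential l.val x) *
        AddCircle.liftIoc (1 / N : ℝ) a (S.indicator (exponential l.val)) x
      = S.indicator (fun _ => (L.card : ℂ)) x := by
  obtain ⟨n, hnI, hlift⟩ := exists_liftIoc_coe_eq (p := (1 / N : ℝ)) (α := ℂ) a x
  simp only [hlift, mul_one_div]
  by_cases hn : n = 0
  · have hsum := sum_conj_exponential_mul_exponential_add L x 0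
    simp only [hn, Int.cast_zero, zero_div, add_zero, charSum_zero] at hsum ⊢
    by_cases hxS : x ∈ S
    · simpa only [Set.indicator_of_mem hxS] using hsum
    · simp [hxS]
  · have hxS : x ∉ S := fun hxS => hn <|
      (existsUnique_add_zsmul_mem_Ioc (fact_one_div_pos (N := N)).out x a).unique
        (by simpa using hnI) (by simpa using hSI hxS)
    rw [Set.indicator_of_notMem hxS]
    by_cases hyS : x + n / N ∈ S
    · have hzero : (0 : ℤ) ∈ fibre N Ω x := by simpa [fibre] using hx
      simp only [Set.indicator_of_mem hyS, sum_conj_exponential_mul_exponential_add]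
      simpa using hfibre.charSum_eq_zero (hSΩ hyS) hzero hn
    · simp [hyS]

variable {Ω : Set ℝ} {L : Finset (ZMod N)} {f : ℝ → ℂ}

lemma setIntegral_conj_exponential_mul_comp_coe_eq_zero (hfin : volume Ω < ⊤)
    (hf : MemLp f 2 (volume.restrict Ω))
    (horth : ∀ l ∈ frequencySet L, ∫ x in Ω, starRingEnd ℂ (exponential l x) * f x = 0)
    {l : ZMod N} (hl : l ∈ L) {φ : AddCircle (1 / N : ℝ) → ℂ} (hφ : Measurable φ)
    {C : ℝ} (hφC : ∀ q, ‖φ q‖ ≤ C) :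
    ∫ x in Ω, starRingEnd ℂ (exponential l.val x) * f x * φ x = 0 := by
  have : IsFiniteMeasure (volume.restrict Ω) := isFiniteMeasure_restrict.mpr hfin.ne
  have hmeas : AEStronglyMeasurable (fun x => starRingEnd ℂ (exponential l.val x) * f x)
      (volume.restrict Ω) :=
    (Complex.continuous_conj.comp (continuous_exponential _)).aestronglyMeasurable.mul hf.1
  refine integral_mul_comp_coe_eq_zero (hf.of_le hmeas (by simp)) (fun k => ?_)
    (.of_bound hφ.aestronglyMeasurable C (.of_forall hφC))
  rw [← horth (l.val - N * k : ℤ) ⟨_, by simpa using hl, rfl⟩]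
  refine integral_congr_ae (.of_forall fun x => ?_)
  simp only [fourier_one_div_coe, conj_exponential]
  rw [mul_right_comm, ← exponential_add_left]
  congr 2
  push_cast
  ring

theorem setIntegral_eq_zero_of_forall_frequencySet (hΩ : MeasurableSet Ω) (hfin : volume Ω < ⊤)
    (hL : L.Nonempty) (hfibre : ∀ᵐ x : ℝ, IsIntSpectralPair (fibre N Ω x) L)
    (hf : MemLp f 2 (volume.restrict Ω))
    (horth : ∀ l ∈ frequencySet L, ∫ x in Ω, starRingEnd ℂ (exponential l x) * f x = 0)
    {S : Set ℝ} (hS : MeasurableSet S) (hSΩ : S ⊆ Ω) {a : ℝ} (hSI : S ⊆ Set.Ioc a (a + 1 / N)) :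
    ∫ x in S, f x = 0 := by
  have : IsFiniteMeasure (volume.restrict Ω) := isFiniteMeasure_restrict.mpr hfin.ne
  let φ (l : ZMod N) : AddCircle (1 / N : ℝ) → ℂ :=
    AddCircle.liftIoc (1 / N : ℝ) a (S.indicator (exponential l.val))
  have hφ (l : ZMod N) : Measurable (φ l) :=
    measurable_liftIoc a ((continuous_exponential _).measurable.indicator hS)
  have norm_φ_le (l : ZMod N) (q : AddCircle (1 / N : ℝ)) : ‖φ l q‖ ≤ 1 :=
    (norm_indicator_le_norm_self _ _).trans (norm_exponential _ _).le
  have hint (l : ZMod N) : Integrable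
      (fun x => starRingEnd ℂ (exponential l.val x) * f x * φ l x) (volume.restrict Ω) := by
    refine (hf.integrable one_le_two).mono ?_ (.of_forall fun x => ?_)
    · exact ((Complex.continuous_conj.comp (continuous_exponential _)).aestronglyMeasurable.mul
        hf.1).mul ((hφ l).comp AddCircle.measurable_mk').aestronglyMeasurable
    · simpa using mul_le_mul_of_nonneg_left (norm_φ_le l x) (norm_nonneg (f x))
  have hcard : (L.card : ℂ) ≠ 0 := by exact_mod_cast hL.card_pos.ne'
  refine (mul_eq_zero.mp ?_).resolve_left hcard
  calc (L.card : ℂ) * ∫ x in S, f x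
      = ∫ x in Ω, S.indicator (fun x => (L.card : ℂ) * f x) x := by
        rw [setIntegral_indicator hS, Set.inter_eq_right.mpr hSΩ, integral_const_mul]
    _ = ∫ x in Ω, ∑ l ∈ L, starRingEnd ℂ (exponential l.val x) * f x * φ l x := by
        refine integral_congr_ae ?_
        filter_upwards [ae_restrict_mem hΩ, ae_restrict_of_ae hfibre] with x hxΩ hx
        simp only [mul_right_comm _ (f x), ← Finset.sum_mul, φ,
          sum_conj_exponential_mul_liftIoc hSΩ hSI hxΩ hx, Set.indicator_mul_left]
    _ = 0 := by
        rw [integral_finsetSum _ fun l _ => hint l]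
        exact Finset.sum_eq_zero fun l hl => setIntegral_conj_exponential_mul_comp_coe_eq_zero
          hfin hf horth hl (hφ l) (norm_φ_le l)

theorem ae_eq_zero_of_forall_frequencySet (hΩ : MeasurableSet Ω) (hfin : volume Ω < ⊤)
    (hL : L.Nonempty) (hfibre : ∀ᵐ x : ℝ, IsIntSpectralPair (fibre N Ω x) L)
    (hf : MemLp f 2 (volume.restrict Ω))
    (horth : ∀ l ∈ frequencySet L, ∫ x in Ω, starRingEnd ℂ (exponential l x) * f x = 0) :
    f =ᵐ[volume.restrict Ω] 0 := by
  have : IsFiniteMeasure (volume.restrict Ω) := isFiniteMeasure_restrict.mpr hfin.ne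
  have hlocal (a : ℝ) : f =ᵐ[(volume.restrict Ω).restrict (Set.Ioc a (a + 1 / N))] 0 := by
    refine ae_eq_zero_of_forall_setIntegral_eq_of_sigmaFinite
      (fun s _ _ => (hf.integrable one_le_two).restrict.integrableOn) fun s hs _ => ?_
    rw [Measure.restrict_restrict hs, Measure.restrict_restrict (hs.inter measurableSet_Ioc)]
    exact setIntegral_eq_zero_of_forall_frequencySet hΩ hfin hL hfibre hf horth
      ((hs.inter measurableSet_Ioc).inter hΩ) Set.inter_subset_right
      (Set.inter_subset_left.trans Set.inter_subset_right)
  have hcover := iUnion_Ioc_add_zsmul (fact_one_div_pos (N := N)).out 0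
  rw [← Measure.restrict_univ (μ := volume.restrict Ω), ← hcover]
  refine (ae_restrict_iUnion_iff _ _).mpr fun k => ?_
  rw [add_one_zsmul, ← add_assoc]
  exact hlocal _

end Completeness

section UniversalSpectrum

variable {N : ℕ} [NeZero N] {Ω : Set ℝ} {L : Finset (ZMod N)}

theorem topologicalClosure_span_exponential_eq_top {Λ : Set ℝ} [IsFiniteMeasure (volume.restrict Ω)]
    (hcomplete : ∀ f : ℝ → ℂ, MemLp f 2 (volume.restrict Ω) →
      (∀ l ∈ Λ, ∫ x in Ω, starRingEnd ℂ (exponential l x) * f x = 0) →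
      f =ᵐ[volume.restrict Ω] 0) :
    (Submodule.span ℂ {f : Lp ℂ 2 (volume.restrict Ω) |
      ∃ l ∈ Λ, ∀ᵐ x ∂(volume.restrict Ω), f x = exponential l x}).topologicalClosure = ⊤ := by
  rw [Submodule.topologicalClosure_eq_top_iff, Submodule.eq_bot_iff]
  intro f hf
  refine (Lp.eq_zero_iff_ae_eq_zero).mpr (hcomplete f (Lp.memLp f) fun l hl => ?_)
  have hexp := memLp_exponential l 2 (volume.restrict Ω)
  rw [← hf _ (Submodule.subset_span ⟨l, hl, hexp.coeFn_toLp⟩), L2.inner_def]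
  refine integral_congr_ae ?_
  filter_upwards [hexp.coeFn_toLp] with x hx
  rw [hx, RCLike.inner_apply, mul_comm]

theorem isSpectrum1_frequencySet (hΩ : MeasurableSet Ω) (hfin : volume Ω < ⊤) (hL : L.Nonempty)
    (hfibre : ∀ᵐ x : ℝ, IsIntSpectralPair (fibre N Ω x) L) : IsSpectrum1 Ω (frequencySet L) := by
  have : IsFiniteMeasure (volume.restrict Ω) := isFiniteMeasure_restrict.mpr hfin.ne
  constructor
  · rintro _ ⟨m, hm, rfl⟩ _ ⟨m', hm', rfl⟩ hne
    change ∫ x in Ω, exponential m x * starRingEnd ℂ (exponential m' x) = 0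
    simp only [exponential_mul_conj, ← Int.cast_sub]
    exact setIntegral_exponential_sub_eq_zero hΩ hfin hfibre hm hm' fun heq => hne (by rw [heq])
  · exact topologicalClosure_span_exponential_eq_top fun f hf horth =>
      ae_eq_zero_of_forall_frequencySet hΩ hfin hL hfibre hf horth

theorem stmt11_general (hΩ : MeasurableSet Ω) (hfin : volume Ω < ⊤) {B : Finset (ZMod N)}
    (hcard : B.card * L.card = N) (hB : ∀ l ∈ L, ∀ l' ∈ L, l ≠ l' → charSum B (l - l') ≠ 0)
    (h : Tiles1 Ω (translationSet B)) : IsSpectrum1 Ω (frequencySet L) := by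
  have hL : L.Nonempty := Finset.card_pos.mp <| Nat.pos_of_mul_pos_left (hcard ▸ NeZero.pos N)
  exact isSpectrum1_frequencySet hΩ hfin hL (h.ae_isIntSpectralPair_fibre hcard hB)

end UniversalSpectrum

section Tij

/-- The residues modulo `900` of the elements of `tijB`. -/
def tijResidues : Finset (ZMod 900) := tijB.image (↑)

lemma card_tijResidues : tijResidues.card = 30 := by decide +kernel

-- `1801` is a prime congruent to `1` modulo `900`, so `ZMod 1801` has primitive `900`-th roots of
-- unity, and integer combinations of complex ones can be tested for vanishing there.
lemma isPrimitiveRoot_121 : IsPrimitiveRoot (121 : ZMod 1801) 900 := by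
  have hpow (n : ℕ) : (121 : ZMod 1801) ^ n = 1 ↔ 121 ^ n % 1801 = 1 := by
    exact_mod_cast ZMod.natCast_eq_natCast_iff' (121 ^ n) 1 1801
  have hsmall : ∀ n < 900, 0 < n → 121 ^ n % 1801 ≠ 1 := by decide +kernel
  exact .mk_of_lt _ (by norm_num) ((hpow 900).mpr (by decide +kernel)) fun n hpos hlt =>
    mt (hpow n).mp (hsmall n hlt hpos)

lemma not_dvd_sum_pow_tijResidues : ∀ l ∈ tijResidues, ∀ l' ∈ tijResidues,
    ¬ 1801 ∣ ∑ b ∈ tijResidues, 121 ^ (b * (l - l')).val := by decide +kernel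

theorem charSum_tijResidues_sub_ne_zero {l l' : ZMod 900} (hl : l ∈ tijResidues)
    (hl' : l' ∈ tijResidues) : charSum tijResidues (l - l') ≠ 0 := by
  have : Fact (Nat.Prime 1801) := ⟨by norm_num⟩
  refine charSum_ne_zero_of_sum_pow_ne_zero isPrimitiveRoot_121 ?_
  have hmod := not_dvd_sum_pow_tijResidues l hl l' hl'
  rw [← ZMod.natCast_eq_zero_iff] at hmod
  exact_mod_cast hmod

end Tij

/-- `Λ_B = 900ℤ + B` is a universal spectrum for the tiling set `𝒯_B = ℤ + (1/900)B`:
every measurable `Ω ⊆ ℝ` of finite positive measure that tiles `ℝ` by `𝒯_B` has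
`Λ_B` as a spectrum. -/
theorem stmt11 :
    ∀ Ω : Set ℝ, MeasurableSet Ω → 0 < volume Ω → volume Ω < ⊤ →
      Tiles1 Ω {x : ℝ | ∃ t : ℤ, ∃ a ∈ tijB, x = (t : ℝ) + (a : ℝ) / 900} →
      IsSpectrum1 Ω {x : ℝ | ∃ t : ℤ, ∃ a ∈ tijB, x = 900 * (t : ℝ) + (a : ℝ)} := by
  intro Ω hΩ _ hfin htiles
  have htranslations := translationSet_image_intCast (N := 900) tijB
  have hfrequencies := frequencySet_image_intCast (N := 900) tijB
  push_cast at htranslations hfrequencies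
  rw [← htranslations] at htiles
  rw [← hfrequencies]
  exact stmt11_general hΩ hfin (L := tijResidues) (by rw [card_tijResidues])
    (fun l hl l' hl' _ => charSum_tijResidues_sub_ne_zero hl hl') htiles
end

section
/- Let m be a positive integer and let 𝒞 ⊆ {0, 1, …, m−1} be a nonempty set such that some measurable set of finite positive measure tiles ℝ by the translation set 𝒯 = ℤ + (1/m)𝒞. If Λ = mℤ + 𝒞 is a universal spectrum for 𝒯, then m = |𝒞|². -/
open MeasureTheory

/-!
The proof measures `Ω` twice. Cutting the translates of a tile along a fundamental domain of a
lattice `G` shows that a tile for `k` cosets of `G` has measure `covol G / k`. On the other side,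
let `Λ` be a spectrum made of `k` cosets of `qℤ`, and let `f ≠ 0` be supported in `Ω` and in an
interval of length `1 / q`. Parseval in `L²(Ω)` gives `∑_{λ ∈ Λ} |𝓕 f λ|² = |Ω| ‖f‖²`, while
Parseval for Fourier series on the interval gives `∑_{λ ∈ b + qℤ} |𝓕 f λ|² = q⁻¹ ‖f‖²` for each
coset `b + qℤ`, so that `|Ω| = k / q`. With `k = |𝒞|` the two measures are `1 / k` and `k / m`.
-/

open AddSubgroup Function Set
open scoped FourierTransform Pointwise

section Cosets

variable {ι E : Type*} [AddGroup E] {G : AddSubgroup E} {a : ι → E}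

lemma injective_add_of_injective_mk (ha : Injective fun i => (a i : E ⧸ G)) :
    Injective fun x : ι × G => a x.1 + x.2 := by
  rintro ⟨i, g⟩ ⟨j, h⟩ (hgh : a i + g = a j + h)
  obtain rfl : i = j := ha <| by
    simpa using congrArg ((↑) : E → E ⧸ G) hgh
  simpa using hgh

lemma range_add_coe_eq_range_add (a : ι → E) (G : AddSubgroup E) :
    range (fun x : ι × G => a x.1 + x.2) = range a + G := by
  ext x
  simp [mem_add]

end Cosets

lemma injective_coe_addCircle_of_mem_Ico {ι : Type*} {p : ℝ} (hp : 0 < p) {a : ι → ℝ}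
    (ha : Injective a) (hap : ∀ i, a i ∈ Ico 0 p) : Injective fun i => (a i : AddCircle p) := by
  have : Fact (0 < p) := ⟨hp⟩
  have hap' : ∀ i, a i ∈ Ico 0 (0 + p) := by simpa using hap
  exact fun i j hij => ha ((AddCircle.coe_eq_coe_iff_of_mem_Ico (hap' i) (hap' j)).1 hij)

lemma range_add_zmultiples_eq_setOf {α : Type*} (s : Finset α) (a : α → ℝ) (p : ℝ) :
    range (fun i : s => a i) + (zmultiples p : Set ℝ) =
      {x | ∃ n : ℤ, ∃ i ∈ s, x = p * n + a i} := by
  ext x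
  constructor
  · rintro ⟨_, ⟨i, rfl⟩, _, ⟨n, rfl⟩, rfl⟩
    exact ⟨n, i, i.2, by simp only [zsmul_eq_mul]; ring⟩
  · rintro ⟨n, i, hi, rfl⟩
    exact ⟨a i, ⟨⟨i, hi⟩, rfl⟩, n • p, ⟨n, rfl⟩, by simp only [zsmul_eq_mul]; ring⟩

section Tiling

variable {ι : Type*} {Ω : Set ℝ}

lemma Tiles1.volume_eq_tsum_volume_inter [Countable ι] {τ : ι → ℝ} (hτ : Injective τ)
    (hΩ : MeasurableSet Ω) (h : Tiles1 Ω (range τ)) (S : Set ℝ) :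
    volume S = ∑' i, volume ((fun x => x + τ i) '' Ω ∩ S) := by
  obtain ⟨hcover, hdisj⟩ := h
  rw [biUnion_range, ← compl_eq_univ_sdiff] at hcover
  have hmeas (i : ι) : MeasurableSet ((fun x => x + τ i) '' Ω) :=
    (measurableEmbedding_addRight (τ i)).measurableSet_image' hΩ
  have hdisj' : Pairwise (AEDisjoint volume on fun i => (fun x => x + τ i) '' Ω) :=
    fun i j hij => hdisj _ (mem_range_self i) _ (mem_range_self j) (hτ.ne hij)
  calc volume S = volume.restrict S univ := by simp
    _ = volume.restrict S (⋃ i, (fun x => x + τ i) '' Ω) :=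
      (measure_congr (ae_restrict_of_ae (ae_eq_univ.2 hcover))).symm
    _ = ∑' i, volume.restrict S ((fun x => x + τ i) '' Ω) :=
      measure_iUnion₀ (hdisj'.mono fun _ _ hij => Measure.restrict_le_self.absolutelyContinuous hij)
        fun i => (hmeas i).nullMeasurableSet
    _ = ∑' i, volume ((fun x => x + τ i) '' Ω ∩ S) := by
      simp only [Measure.restrict_apply (hmeas _)]

lemma Tiles1.card_mul_volume_eq [Fintype ι] {G : AddSubgroup ℝ} [Countable G] {F : Set ℝ}
    (hF : IsAddFundamentalDomain G F) {a : ι → ℝ} (ha : Injective fun i => (a i : ℝ ⧸ G))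
    (hΩ : MeasurableSet Ω) (h : Tiles1 Ω (range a + G)) :
    Fintype.card ι * volume Ω = volume F := by
  have hcoset (i : ι) (g : G) :
      (fun x => x + (a i + g)) '' Ω = g +ᵥ ((fun x => x + a i) '' Ω) := by
    rw [← image_vadd, image_image]
    refine image_congr fun x _ => ?_
    rw [AddSubgroup.vadd_def, vadd_eq_add]
    ring
  rw [← range_add_coe_eq_range_add] at h
  symm
  calc volume F = ∑' x : ι × G, volume ((fun y => y + (a x.1 + x.2)) '' Ω ∩ F) :=
      h.volume_eq_tsum_volume_inter (injective_add_of_injective_mk ha) hΩ F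
    _ = ∑' i, ∑' g : G, volume ((g +ᵥ ((fun x => x + a i) '' Ω)) ∩ F) := by
      simp only [ENNReal.tsum_prod', hcoset]
    _ = ∑ i, volume ((fun x => x + a i) '' Ω) := by
      simp only [← hF.measure_eq_tsum, tsum_fintype]
    _ = Fintype.card ι * volume Ω := by
      simp [image_add_right, measure_preimage_add_right]

lemma Tiles1.card_mul_volume_eq_ofReal [Fintype ι] {p : ℝ} (hp : 0 < p) {a : ι → ℝ}
    (ha : Injective fun i => (a i : AddCircle p)) (hΩ : MeasurableSet Ω)
    (h : Tiles1 Ω (range a + (zmultiples p : Set ℝ))) :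
    Fintype.card ι * volume Ω = ENNReal.ofReal p := by
  rw [h.card_mul_volume_eq (isAddFundamentalDomain_Ioc hp 0) ha hΩ, Real.volume_Ioc, zero_add,
    sub_zero]

end Tiling

lemma hasSum_sq_norm_inner_div_sq_norm {ι 𝕜 E : Type*} [RCLike 𝕜] [NormedAddCommGroup E]
    [InnerProductSpace 𝕜 E] [CompleteSpace E] {e : ι → E} (hne : ∀ i, e i ≠ 0)
    (horth : Pairwise fun i j => inner 𝕜 (e i) (e j) = 0)
    (hdense : (Submodule.span 𝕜 (range e)).topologicalClosure = ⊤) (x : E) :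
    HasSum (fun i => ‖inner 𝕜 (e i) x‖ ^ 2 / ‖e i‖ ^ 2) (‖x‖ ^ 2) := by
  let v : ι → E := fun i => (‖e i‖⁻¹ : 𝕜) • e i
  have hv : Orthonormal 𝕜 v :=
    ⟨fun i => norm_smul_inv_norm (hne i), fun i j hij => by
      simp [v, inner_smul_left, inner_smul_right, horth hij]⟩
  have hspan : Submodule.span 𝕜 (range e) ≤ Submodule.span 𝕜 (range v) := by
    rw [Submodule.span_le]
    rintro _ ⟨i, rfl⟩
    have hei : e i = (‖e i‖ : 𝕜) • v i := by simp [v, smul_smul, hne i]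
    rw [hei]
    exact Submodule.smul_mem _ _ (Submodule.subset_span ⟨i, rfl⟩)
  let b := HilbertBasis.mk hv (hdense ▸ Submodule.topologicalClosure_mono hspan)
  have hb (i : ι) : ‖inner 𝕜 (e i) x‖ ^ 2 / ‖e i‖ ^ 2 = ‖b.repr x i‖ ^ 2 := by
    rw [b.repr_apply_apply, HilbertBasis.coe_mk, inner_smul_left, norm_mul, mul_pow]
    simp [div_eq_inv_mul]
  have hrepr := lp.hasSum_norm (p := 2) (by simp) (b.repr x)
  simpa [hb] using hrepr

section Exponentials

lemma sq_norm_toLp_two {α E : Type*} [MeasurableSpace α] {μ : Measure α} [NormedAddCommGroup E]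
    {f : α → E} (hf : MemLp f 2 μ) : ‖hf.toLp f‖ ^ 2 = ∫ x, ‖f x‖ ^ 2 ∂μ := by
  rw [Lp.norm_toLp, hf.eLpNorm_eq_integral_rpow_norm two_ne_zero ENNReal.ofNat_ne_top,
    ENNReal.toReal_ofReal (by positivity), ENNReal.toReal_ofNat, ← Real.rpow_natCast,
    ← Real.rpow_mul (by positivity)]
  simp

/-- The exponential `x ↦ e^{2πilx}` as an element of `L²(μ)`. -/
noncomputable def expLp (μ : Measure ℝ) [IsFiniteMeasure μ] (l : ℝ) : Lp ℂ 2 μ :=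
  MemLp.toLp (fun x => (𝐞 (l * x) : ℂ)) <|
    MemLp.of_bound (by fun_prop) 1 (.of_forall fun x => (Circle.norm_coe _).le)

variable {μ : Measure ℝ} [IsFiniteMeasure μ]

lemma coeFn_expLp (l : ℝ) : expLp μ l =ᵐ[μ] fun x => (𝐞 (l * x) : ℂ) :=
  MemLp.coeFn_toLp _

lemma inner_expLp (l : ℝ) (f : Lp ℂ 2 μ) :
    inner ℂ (expLp μ l) f = ∫ x, 𝐞 (-(x * l)) • f x ∂μ := by
  rw [L2.inner_def]
  refine integral_congr_ae ?_
  filter_upwards [coeFn_expLp l] with x hx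
  rw [hx, RCLike.inner_apply', Circle.smul_def, smul_eq_mul, AddChar.map_neg_eq_inv,
    Circle.coe_inv_eq_conj, mul_comm l]

lemma sq_norm_expLp (l : ℝ) : ‖expLp μ l‖ ^ 2 = μ.real univ := by
  simp only [expLp, sq_norm_toLp_two, Circle.norm_coe]
  simp

end Exponentials

lemma coe_fourierChar_mul (l x : ℝ) :
    (𝐞 (l * x) : ℂ) = Complex.exp (2 * Real.pi * Complex.I * l * x) := by
  rw [Real.fourierChar_apply]
  push_cast
  ring_nf

section Spectrum

variable {ι : Type*} {Ω : Set ℝ}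

lemma IsSpectrum1.pairwise_inner_expLp_eq_zero [IsFiniteMeasure (volume.restrict Ω)] {l : ι → ℝ}
    (hl : Injective l) (h : IsSpectrum1 Ω (range l)) :
    Pairwise fun i j =>
      inner ℂ (expLp (volume.restrict Ω) (l i)) (expLp (volume.restrict Ω) (l j)) = 0 := by
  intro i j hij
  rw [inner_expLp, ← h.1 _ (mem_range_self j) _ (mem_range_self i) (hl.ne hij.symm)]
  refine integral_congr_ae ?_
  filter_upwards [coeFn_expLp (l j)] with x hx
  rw [hx, ← coe_fourierChar_mul, ← coe_fourierChar_mul, ← Circle.coe_inv_eq_conj,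
    ← AddChar.map_neg_eq_inv, Circle.smul_def, smul_eq_mul, mul_comm, mul_comm x]

lemma IsSpectrum1.topologicalClosure_span_range_expLp [IsFiniteMeasure (volume.restrict Ω)]
    {l : ι → ℝ} (h : IsSpectrum1 Ω (range l)) :
    (Submodule.span ℂ (range fun i => expLp (volume.restrict Ω) (l i))).topologicalClosure = ⊤ := by
  rw [eq_top_iff, ← h.2]
  refine Submodule.topologicalClosure_mono (Submodule.span_mono ?_)
  rintro f ⟨_, ⟨i, rfl⟩, hf⟩
  refine ⟨i, Lp.ext ?_⟩
  filter_upwards [hf, coeFn_expLp (l i)] with x hfx hex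
  rw [hfx, hex, coe_fourierChar_mul]

lemma inner_expLp_toLp_eq_fourier [IsFiniteMeasure (volume.restrict Ω)] {f : ℝ → ℂ}
    (hf : MemLp f 2) (hfΩ : support f ⊆ Ω) (l : ℝ) :
    inner ℂ (expLp (volume.restrict Ω) l) ((hf.restrict Ω).toLp f) = 𝓕 f l := by
  calc inner ℂ (expLp (volume.restrict Ω) l) ((hf.restrict Ω).toLp f)
      = ∫ x in Ω, 𝐞 (-(x * l)) • (hf.restrict Ω).toLp f x := inner_expLp l _
    _ = ∫ x in Ω, 𝐞 (-(x * l)) • f x :=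
      integral_congr_ae <| (hf.restrict Ω).coeFn_toLp.mono fun x hx =>
        congrArg (𝐞 (-(x * l)) • ·) hx
    _ = ∫ x, 𝐞 (-(x * l)) • f x :=
      setIntegral_eq_integral_of_forall_compl_eq_zero fun x hx => by
        rw [notMem_support.1 (notMem_subset hfΩ hx), smul_zero]
    _ = 𝓕 f l := (Real.fourier_real_eq f l).symm

lemma IsSpectrum1.hasSum_sq_norm_fourier {l : ι → ℝ} (hl : Injective l)
    (h : IsSpectrum1 Ω (range l)) (hpos : 0 < volume Ω) (hfin : volume Ω < ⊤) {f : ℝ → ℂ}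
    (hf : MemLp f 2) (hfΩ : support f ⊆ Ω) :
    HasSum (fun i => ‖𝓕 f (l i)‖ ^ 2) (volume.real Ω * ∫ x, ‖f x‖ ^ 2) := by
  have : IsFiniteMeasure (volume.restrict Ω) := ⟨by simpa using hfin⟩
  have hΩ : 0 < volume.real Ω := ENNReal.toReal_pos hpos.ne' hfin.ne
  have hnorm (i : ι) : ‖expLp (volume.restrict Ω) (l i)‖ ^ 2 = volume.real Ω := by
    simp [sq_norm_expLp]
  have hfnorm : ‖(hf.restrict Ω).toLp f‖ ^ 2 = ∫ x, ‖f x‖ ^ 2 := by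
    rw [sq_norm_toLp_two, setIntegral_eq_integral_of_forall_compl_eq_zero]
    exact fun x hx => by simp [notMem_support.1 (notMem_subset hfΩ hx)]
  have hparseval := hasSum_sq_norm_inner_div_sq_norm
    (fun i h0 => hΩ.ne (by simpa [h0] using hnorm i))
    (h.pairwise_inner_expLp_eq_zero hl) h.topologicalClosure_span_range_expLp
    ((hf.restrict Ω).toLp f)
  simpa only [inner_expLp_toLp_eq_fourier hf hfΩ, hnorm, hfnorm, mul_div_cancel₀ _ hΩ.ne']
    using hparseval.mul_left (volume.real Ω)

end Spectrum

section FourierSeries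

variable {q a : ℝ} {f : ℝ → ℂ}

lemma fourierCoeffOn_fourierChar_smul (ha : a < a + q⁻¹) (hfa : support f ⊆ Ioc a (a + q⁻¹))
    (b : ℝ) (n : ℤ) :
    fourierCoeffOn ha (fun x => 𝐞 (-(x * b)) • f x) n = q * 𝓕 f (b + n • q) := by
  have hf0 (x : ℝ) (hx : x ∉ Ioc a (a + q⁻¹)) : f x = 0 :=
    notMem_support.1 (notMem_subset hfa hx)
  have hchar (x : ℝ) : fourier (-n) (x : AddCircle (a + q⁻¹ - a)) • 𝐞 (-(x * b)) • f x =
      𝐞 (-(x * (b + n • q))) • f x := by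
    simp only [Circle.smul_def, smul_eq_mul, fourier_coe_apply, Real.fourierChar_apply]
    rw [← mul_assoc, ← Complex.exp_add]
    congr 2
    push_cast
    simp only [add_sub_cancel_left, div_inv_eq_mul, zsmul_eq_mul]
    ring
  simp only [fourierCoeffOn_eq_integral, intervalIntegral.integral_of_le ha.le, hchar]
  rw [setIntegral_eq_integral_of_forall_compl_eq_zero fun x hx => by rw [hf0 x hx, smul_zero],
    ← Real.fourier_real_eq]
  simp

lemma hasSum_int_sq_norm_fourier_of_support_subset_Ioc (hq : 0 < q) (hf : MemLp f 2)
    (hfa : support f ⊆ Ioc a (a + q⁻¹)) (b : ℝ) :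
    HasSum (fun n : ℤ => ‖𝓕 f (b + n • q)‖ ^ 2) (q⁻¹ * ∫ x, ‖f x‖ ^ 2) := by
  have ha : a < a + q⁻¹ := lt_add_of_pos_right a (inv_pos.2 hq)
  have hf0 (x : ℝ) (hx : x ∉ Ioc a (a + q⁻¹)) : f x = 0 :=
    notMem_support.1 (notMem_subset hfa hx)
  have hmodulated : MemLp (fun x => 𝐞 (-(x * b)) • f x) 2 :=
    hf.congr_norm
      ((Continuous.aestronglyMeasurable (by fun_prop : Continuous fun x => 𝐞 (-(x * b)))).smul hf.1)
      (.of_forall fun x => (Circle.norm_smul _ _).symm)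
  have hnorm : ∫ x in a..a + q⁻¹, ‖𝐞 (-(x * b)) • f x‖ ^ 2 = ∫ x, ‖f x‖ ^ 2 := by
    simp only [Circle.norm_smul, intervalIntegral.integral_of_le ha.le]
    exact setIntegral_eq_integral_of_forall_compl_eq_zero fun x hx => by simp [hf0 x hx]
  have hparseval := hasSum_sq_fourierCoeffOn ha (hmodulated.restrict _)
  simp only [fourierCoeffOn_fourierChar_smul ha hfa, hnorm, add_sub_cancel_left, inv_inv,
    norm_mul, mul_pow, Complex.norm_real, Real.norm_eq_abs, sq_abs, smul_eq_mul] at hparseval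
  have hscale : q * ∫ x, ‖f x‖ ^ 2 = q ^ 2 * (q⁻¹ * ∫ x, ‖f x‖ ^ 2) := by field_simp
  rwa [hscale, hasSum_mul_left_iff (pow_ne_zero 2 hq.ne')] at hparseval

lemma hasSum_zmultiples_sq_norm_fourier_of_support_subset_Ioc (hq : 0 < q) (hf : MemLp f 2)
    (hfa : support f ⊆ Ioc a (a + q⁻¹)) (b : ℝ) :
    HasSum (fun g : zmultiples q => ‖𝓕 f (b + g)‖ ^ 2) (q⁻¹ * ∫ x, ‖f x‖ ^ 2) := by
  let e : ℤ ≃ zmultiples q := Equiv.ofInjective _ (zsmul_left_strictMono hq).injective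
  exact e.hasSum_iff.1 (hasSum_int_sq_norm_fourier_of_support_subset_Ioc hq hf hfa b)

end FourierSeries

lemma exists_measure_inter_Ioc_ne_zero (μ : Measure ℝ) {S : Set ℝ} (hS : μ S ≠ 0) {p : ℝ}
    (hp : 0 < p) : ∃ a, μ (S ∩ Ioc a (a + p)) ≠ 0 := by
  by_contra! hnull
  refine hS (measure_mono_null ?_ (measure_iUnion_null fun n : ℤ => hnull (n • p)))
  simp only [← inter_iUnion, ← add_one_zsmul, iUnion_Ioc_zsmul hp, inter_univ, subset_rfl]

lemma IsSpectrum1.mul_volume_eq_card {κ : Type*} [Fintype κ] {Ω : Set ℝ} {q : ℝ} (hq : 0 < q)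
    {b : κ → ℝ} (hb : Injective fun j => (b j : AddCircle q)) (hΩ : MeasurableSet Ω)
    (hpos : 0 < volume Ω) (hfin : volume Ω < ⊤)
    (h : IsSpectrum1 Ω (range b + (zmultiples q : Set ℝ))) :
    q * volume.real Ω = Fintype.card κ := by
  obtain ⟨a, ha⟩ := exists_measure_inter_Ioc_ne_zero volume hpos.ne' (inv_pos.2 hq)
  set S := Ω ∩ Ioc a (a + q⁻¹)
  have hS : MeasurableSet S := hΩ.inter measurableSet_Ioc
  have hSfin : volume S ≠ ⊤ := measure_ne_top_of_subset inter_subset_left hfin.ne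
  let f : ℝ → ℂ := S.indicator 1
  have hf : MemLp f 2 := memLp_indicator_const 2 hS 1 (.inr hSfin)
  have hfS : support f ⊆ S := support_indicator_subset
  have hf_norm : ∫ x, ‖f x‖ ^ 2 = volume.real S := by
    have hsq (x : ℝ) : ‖f x‖ ^ 2 = S.indicator 1 x := by
      by_cases hx : x ∈ S <;> simp [f, hx]
    simp only [hsq, integral_indicator_one hS]
  rw [← range_add_coe_eq_range_add] at h
  have hΛ := h.hasSum_sq_norm_fourier (injective_add_of_injective_mk hb) hpos hfin hf
    (hfS.trans inter_subset_left)
  have hcosets := hΛ.prod_fiberwise fun j =>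
    hasSum_zmultiples_sq_norm_fourier_of_support_subset_Ioc hq hf (hfS.trans inter_subset_right)
      (b j)
  have hsum : volume.real Ω * volume.real S = Fintype.card κ * (q⁻¹ * volume.real S) := by
    simpa [hf_norm] using hcosets.unique (hasSum_fintype _)
  have hS0 : volume.real S ≠ 0 := (ENNReal.toReal_pos ha hSfin).ne'
  field_simp at hsum
  linarith

theorem stmt12_general {m : ℕ} (hm : 0 < m) {𝒜 ℬ : Finset ℕ} (h𝒜 : 𝒜 ⊆ Finset.range m)
    (hℬ : ℬ ⊆ Finset.range m) {Ω : Set ℝ} (hΩ : MeasurableSet Ω)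
    (htile : Tiles1 Ω {x : ℝ | ∃ t : ℤ, ∃ a ∈ 𝒜, x = (t : ℝ) + (a : ℝ) / (m : ℝ)})
    (hspec : IsSpectrum1 Ω {x : ℝ | ∃ t : ℤ, ∃ b ∈ ℬ, x = (m : ℝ) * (t : ℝ) + (b : ℝ)}) :
    m = 𝒜.card * ℬ.card := by
  have hm' : (0 : ℝ) < m := Nat.cast_pos.2 hm
  have hlt {s : Finset ℕ} (hs : s ⊆ Finset.range m) (c : s) : (c : ℝ) < m :=
    Nat.cast_lt.2 (Finset.mem_range.1 (hs c.2))
  have hinj𝒜 : Injective fun a : 𝒜 => (((a : ℝ) / m : ℝ) : AddCircle (1 : ℝ)) :=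
    injective_coe_addCircle_of_mem_Ico one_pos
      (fun a a' haa' => Subtype.ext (by simpa [hm.ne'] using haa'))
      fun a => ⟨by positivity, (div_lt_one hm').2 (hlt h𝒜 a)⟩
  have hinjℬ : Injective fun b : ℬ => ((b : ℝ) : AddCircle (m : ℝ)) :=
    injective_coe_addCircle_of_mem_Ico hm' (Nat.cast_injective.comp Subtype.val_injective)
      fun b => ⟨Nat.cast_nonneg _, hlt hℬ b⟩
  have hcard𝒜 : 𝒜.card * volume Ω = 1 := by
    simpa using Tiles1.card_mul_volume_eq_ofReal one_pos hinj𝒜 hΩ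
      (by simpa only [range_add_zmultiples_eq_setOf 𝒜 fun a => (a : ℝ) / m, one_mul] using htile)
  have hpos : 0 < volume Ω := pos_iff_ne_zero.2 (right_ne_zero_of_mul_eq_one hcard𝒜)
  have hfin : volume Ω < ⊤ :=
    ENNReal.lt_top_of_mul_ne_top_right (hcard𝒜 ▸ ENNReal.one_ne_top)
      (left_ne_zero_of_mul_eq_one hcard𝒜)
  have hcardℬ : m * volume.real Ω = ℬ.card := by
    simpa using IsSpectrum1.mul_volume_eq_card hm' hinjℬ hΩ hpos hfin
      (by simpa only [range_add_zmultiples_eq_setOf ℬ Nat.cast] using hspec)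
  have hcard𝒜' : 𝒜.card * volume.real Ω = 1 := by
    simpa [Measure.real] using congrArg ENNReal.toReal hcard𝒜
  have hcast : (m : ℝ) = 𝒜.card * ℬ.card := by
    rw [← hcardℬ, mul_left_comm, hcard𝒜', mul_one]
  exact_mod_cast hcast

/-- If `𝒞 ⊆ {0, …, m-1}` is nonempty, some measurable set of finite positive measure
tiles `ℝ` by `𝒯 = ℤ + (1/m)𝒞`, and `Λ = mℤ + 𝒞` is a universal spectrum for `𝒯`,
then `m = |𝒞|²`. -/
theorem stmt12 (m : ℕ) (hm : 0 < m) (𝒞 : Finset ℕ) (h𝒞 : 𝒞.Nonempty)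
    (h𝒞m : 𝒞 ⊆ Finset.range m)
    (𝒯 : Set ℝ) (h𝒯 : 𝒯 = {x : ℝ | ∃ t : ℤ, ∃ c ∈ 𝒞, x = (t : ℝ) + (c : ℝ) / (m : ℝ)})
    (Λ : Set ℝ) (hΛ : Λ = {x : ℝ | ∃ t : ℤ, ∃ c ∈ 𝒞, x = (m : ℝ) * (t : ℝ) + (c : ℝ)})
    (hexists : ∃ Ω₀ : Set ℝ, MeasurableSet Ω₀ ∧ 0 < volume Ω₀ ∧ volume Ω₀ < ⊤ ∧
      Tiles1 Ω₀ 𝒯)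
    (huniv : ∀ Ω : Set ℝ, MeasurableSet Ω → 0 < volume Ω → volume Ω < ⊤ →
      Tiles1 Ω 𝒯 → IsSpectrum1 Ω Λ) :
    m = 𝒞.card ^ 2 := by
  obtain ⟨Ω, hΩ, hpos, hfin, htile⟩ := hexists
  have hspec := huniv Ω hΩ hpos hfin htile
  rw [sq]
  exact stmt12_general hm h𝒞m h𝒞m hΩ (h𝒯 ▸ htile) (hΛ ▸ hspec)
end
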